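/- For every q with 0 < q < 1, the set Λ_q = {f ∈ V : sup_{0<r<1} (1/(2π)) ∫_{−π}^{π} |Im f(r e^{iθ})|^q dθ = ∞} — i.e., the set of u ∈ ⋂_{p<1} h^p whose normalized harmonic conjugate ũ does not belong to h^q — is a G_δ and dense subset of the metric space (V, d). -/

import Mathlib

open Complex Set Metric

noncomputable section

/-- `N_p`-mean of a real function on the circle of radius `r`:
`(1/2π) ∫_{-π}^{π} |u(r e^{iθ})|^p dθ`. -/
def circMeanR (p : ℝ) (u : ℂ → ℝ) (r : ℝ) : ℝ :=
  (1 / (2 * Real.pi)) * ∫ θ in (-Real.pi)..Real.pi,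
    |u ((r : ℂ) * Complex.exp ((θ : ℂ) * Complex.I))| ^ p

/-- The space `⋂_{p<1} h^p`, identified with the holomorphic functions `f = u + i ũ`
with `Im f(0) = 0` and `Re f ∈ h^p` for all `0 < p < 1`. -/
def HarmV : Type :=
  {f : ℂ → ℂ // DifferentiableOn ℂ f (Metric.ball (0 : ℂ) 1) ∧ (f 0).im = 0 ∧
    ∀ p ∈ Set.Ioo (0 : ℝ) 1, ∃ C : ℝ, ∀ r ∈ Set.Ioo (0 : ℝ) 1,
      circMeanR p (fun z => (f z).re) r ≤ C}

/-- `δ_p(f,g) = sup_{0<r<1} (1/2π) ∫_{-π}^{π} |Re(f-g)(r e^{iθ})|^p dθ`. -/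
def deltaP (p : ℝ) (f g : ℂ → ℂ) : ℝ :=
  ⨆ r : Set.Ioo (0 : ℝ) 1, circMeanR p (fun z => (f z - g z).re) r

/-- The metric `d(f,g) = Σ_{n≥1} 2^{-n} δ_{p_n}(f,g)/(1+δ_{p_n}(f,g))`, `p_n = n/(n+1)`
(indices shifted so `n : ℕ` starts at `0`). -/
def harmDist (f g : HarmV) : ℝ :=
  ∑' n : ℕ, (1 / 2 : ℝ) ^ (n + 1) *
    (deltaP (((n : ℝ) + 1) / ((n : ℝ) + 2)) f.1 g.1 /
      (1 + deltaP (((n : ℝ) + 1) / ((n : ℝ) + 2)) f.1 g.1))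

/-- The topology induced by a distance function via its open balls. -/
def ballTopology {α : Type*} (d : α → α → ℝ) : TopologicalSpace α :=
  TopologicalSpace.generateFrom {U | ∃ x ε, 0 < ε ∧ U = {y | d x y < ε}}

/-!
On compact subsets of the disc, a holomorphic `f` with `Im f(0) = 0` is bounded in terms of the
`p`-means of `Re f`, so each circle mean of `Im f` depends continuously on `f`; the set where these
means are unbounded is therefore a `G_δ`. If `h` lies in it, then for every `f` all but at most one
of the functions `f + t h` do too, which gives density.

For the existence of one such `h`, consider the series `∑ ±φ(z^(2ⁿ))` with `φ(w) = w / (1 - w²)`.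
The real part of `φ` is a quarter of the difference of two Poisson kernels, and by Kolmogorov's
argument its `p`-mean at radius `ρ` is at most a constant times `ρ^p (1 - ρ²)^(a-p)` for some
`a > p`; at `ρ = r^(2ⁿ)` these bounds have a sum bounded independently of `r`, so the real part of
every such series is in `h^p`.
If all imaginary parts were in `h^q`, Baire's theorem would bound the `q`-means of the series
uniformly in the choice of all but finitely many signs. This contradicts Khinchin's inequality,
because `‖φ(z^(2ⁿ))‖ ≥ 1/4` for as many `n` as desired once `|z|` is close to `1`.
-/

open Filter
open scoped Topology

section CircleMeans

variable {p r : ℝ} {u v w : ℂ → ℝ}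

lemma sphere_abs_subset_unit_ball (hr : r ∈ Ioo (0 : ℝ) 1) :
    sphere (0 : ℂ) |r| ⊆ ball 0 1 := by
  rw [abs_of_pos hr.1]
  exact sphere_subset_closedBall.trans (closedBall_subset_ball hr.2)

lemma circMeanR_eq_circleAverage (p : ℝ) (u : ℂ → ℝ) (r : ℝ) :
    circMeanR p u r = Real.circleAverage (fun z => |u z| ^ p) 0 r := by
  have shifted := intervalIntegral.integral_comp_add_right
    (fun θ : ℝ => |u (circleMap 0 r θ)| ^ p) (-Real.pi) (a := 0) (b := 2 * Real.pi)
  rw [zero_add, show 2 * Real.pi + -Real.pi = Real.pi by ring] at shifted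
  rw [Real.circleAverage_eq_integral_add (-Real.pi), shifted, circMeanR, smul_eq_mul, one_div]
  simp only [circleMap_zero]

lemma circleIntegrable_abs_rpow (hp : 0 ≤ p) (hu : ContinuousOn u (sphere 0 |r|)) :
    CircleIntegrable (fun z => |u z| ^ p) 0 r :=
  (hu.abs.rpow_const fun _ _ => Or.inr hp).circleIntegrable'

lemma circMeanR_nonneg (p : ℝ) (u : ℂ → ℝ) (r : ℝ) : 0 ≤ circMeanR p u r := by
  rw [circMeanR_eq_circleAverage]
  exact Real.circleAverage_nonneg_of_nonneg fun z _ => by positivity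

lemma circMeanR_mono (hp : 0 ≤ p) (hu : ContinuousOn u (sphere 0 |r|))
    (hv : ContinuousOn v (sphere 0 |r|)) (h : ∀ z ∈ sphere (0 : ℂ) |r|, |u z| ≤ |v z|) :
    circMeanR p u r ≤ circMeanR p v r := by
  simp only [circMeanR_eq_circleAverage]
  exact Real.circleAverage_mono (circleIntegrable_abs_rpow hp hu) (circleIntegrable_abs_rpow hp hv)
    fun z hz => Real.rpow_le_rpow (abs_nonneg _) (h z hz) hp

lemma circMeanR_le_rpow_of_abs_le (hp : 0 ≤ p) (hu : ContinuousOn u (sphere 0 |r|)) {B : ℝ}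
    (h : ∀ z ∈ sphere (0 : ℂ) |r|, |u z| ≤ B) : circMeanR p u r ≤ B ^ p := by
  rw [circMeanR_eq_circleAverage]
  exact Real.circleAverage_mono_on_of_le_circle (circleIntegrable_abs_rpow hp hu)
    fun z hz => Real.rpow_le_rpow (abs_nonneg _) (h z hz) hp

lemma circMeanR_le_add_of_abs_le_add (hp : 0 < p) (hp1 : p ≤ 1)
    (hu : ContinuousOn u (sphere 0 |r|)) (hv : ContinuousOn v (sphere 0 |r|))
    (hw : ContinuousOn w (sphere 0 |r|))
    (h : ∀ z ∈ sphere (0 : ℂ) |r|, |u z| ≤ |v z| + |w z|) :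
    circMeanR p u r ≤ circMeanR p v r + circMeanR p w r := by
  simp only [circMeanR_eq_circleAverage]
  have int_u := circleIntegrable_abs_rpow hp.le hu
  have int_v := circleIntegrable_abs_rpow hp.le hv
  have int_w := circleIntegrable_abs_rpow hp.le hw
  rw [← Real.circleAverage_fun_add int_v int_w]
  refine Real.circleAverage_mono int_u (int_v.add int_w) fun z hz => ?_
  calc |u z| ^ p ≤ (|v z| + |w z|) ^ p := Real.rpow_le_rpow (abs_nonneg _) (h z hz) hp.le
    _ ≤ |v z| ^ p + |w z| ^ p := Real.rpow_add_le_add_rpow (abs_nonneg _) (abs_nonneg _) hp.le hp1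

lemma circMeanR_finset_sum_le {ι : Type*} (hp : 0 < p) (hp1 : p ≤ 1) (s : Finset ι)
    {v : ι → ℂ → ℝ} (hv : ∀ i ∈ s, ContinuousOn (v i) (sphere 0 |r|)) :
    circMeanR p (fun z => ∑ i ∈ s, v i z) r ≤ ∑ i ∈ s, circMeanR p (v i) r := by
  have := Finset.le_sum_of_subadditive_on_pred (fun u : ℂ → ℝ => circMeanR p u r)
    (fun u => ContinuousOn u (sphere 0 |r|)) (by simp [circMeanR, hp.ne'])
    (fun u w hu hw => circMeanR_le_add_of_abs_le_add hp hp1 (hu.add hw) hu hw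
      fun z _ => abs_add_le (u z) (w z)) (fun u w hu hw => hu.add hw) v hv
  simpa only [Finset.sum_fn] using this

lemma circMeanR_const_mul (p t : ℝ) (u : ℂ → ℝ) (r : ℝ) :
    circMeanR p (fun z => t * u z) r = |t| ^ p * circMeanR p u r := by
  simp only [circMeanR_eq_circleAverage, abs_mul, Real.mul_rpow (abs_nonneg t) (abs_nonneg _)]
  exact Real.circleAverage_fun_smul (a := |t| ^ p)

lemma abs_circMeanR_sub_le (hp : 0 < p) (hp1 : p ≤ 1)
    (hu : ContinuousOn u (sphere 0 |r|)) (hv : ContinuousOn v (sphere 0 |r|)) :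
    |circMeanR p u r - circMeanR p v r| ≤ circMeanR p (fun z => u z - v z) r := by
  have hsub := hu.sub hv
  have u_le := circMeanR_le_add_of_abs_le_add hp hp1 hu hsub hv fun z _ => by
    simpa using abs_add_le (u z - v z) (v z)
  have v_le := circMeanR_le_add_of_abs_le_add hp hp1 hv hsub hu fun z _ => by
    simpa [abs_sub_comm] using abs_add_le (v z - u z) (u z)
  exact abs_sub_le_iff.2 ⟨sub_le_iff_le_add.2 u_le, sub_le_iff_le_add.2 v_le⟩

end CircleMeans

section HardyMean

variable {p : ℝ} {u v : ℂ → ℝ}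

/-- Membership of `u` in the Hardy class of exponent `p`, without the requirement that `u` be
harmonic: its `p`-means over the circles of radius `r < 1` are bounded. -/
def HasBoundedMeans (p : ℝ) (u : ℂ → ℝ) : Prop :=
  ∃ C : ℝ, ∀ r ∈ Ioo (0 : ℝ) 1, circMeanR p u r ≤ C

/-- The functional `N_p(u) = sup_{0<r<1} (1/2π) ∫ |u(r e^{iθ})|^p dθ`, with the junk value `0` when
the means are unbounded. By definition `deltaP p f g = hardyMean p (Re (f - g))`. -/
def hardyMean (p : ℝ) (u : ℂ → ℝ) : ℝ :=
  ⨆ r : Ioo (0 : ℝ) 1, circMeanR p u r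

lemma HasBoundedMeans.circMeanR_le_hardyMean (hu : HasBoundedMeans p u) {r : ℝ}
    (hr : r ∈ Ioo (0 : ℝ) 1) : circMeanR p u r ≤ hardyMean p u := by
  obtain ⟨C, hC⟩ := hu
  exact le_ciSup (f := fun r : Ioo (0 : ℝ) 1 => circMeanR p u r)
    ⟨C, by rintro _ ⟨s, rfl⟩; exact hC s s.2⟩ ⟨r, hr⟩

lemma hardyMean_le {C : ℝ} (h : ∀ r ∈ Ioo (0 : ℝ) 1, circMeanR p u r ≤ C) : hardyMean p u ≤ C :=
  haveI : Nonempty (Ioo (0 : ℝ) 1) := ⟨⟨1 / 2, by norm_num⟩⟩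
  ciSup_le fun r => h r r.2

lemma hardyMean_nonneg (p : ℝ) (u : ℂ → ℝ) : 0 ≤ hardyMean p u :=
  Real.iSup_nonneg fun r => circMeanR_nonneg p u r

lemma hardyMean_const_mul (p t : ℝ) (u : ℂ → ℝ) :
    hardyMean p (fun z => t * u z) = |t| ^ p * hardyMean p u := by
  simp only [hardyMean, circMeanR_const_mul]
  exact (Real.mul_iSup_of_nonneg (by positivity) _).symm

lemma HasBoundedMeans.const_mul (hu : HasBoundedMeans p u) (t : ℝ) :
    HasBoundedMeans p (fun z => t * u z) := by
  refine ⟨|t| ^ p * hardyMean p u, fun r hr => ?_⟩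
  rw [circMeanR_const_mul]
  gcongr
  exact hu.circMeanR_le_hardyMean hr

lemma circMeanR_add_le_hardyMean_add (hp : p ∈ Ioo (0 : ℝ) 1)
    (cont_u : ContinuousOn u (ball 0 1)) (cont_v : ContinuousOn v (ball 0 1))
    (hu : HasBoundedMeans p u) (hv : HasBoundedMeans p v) {r : ℝ} (hr : r ∈ Ioo (0 : ℝ) 1) :
    circMeanR p (fun z => u z + v z) r ≤ hardyMean p u + hardyMean p v := by
  have hsub := sphere_abs_subset_unit_ball hr
  have cont_add : ContinuousOn (fun z => u z + v z) (sphere 0 |r|) :=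
    (cont_u.mono hsub).add (cont_v.mono hsub)
  exact (circMeanR_le_add_of_abs_le_add hp.1 hp.2.le cont_add (cont_u.mono hsub)
    (cont_v.mono hsub) fun z _ => abs_add_le _ _).trans
    (add_le_add (hu.circMeanR_le_hardyMean hr) (hv.circMeanR_le_hardyMean hr))

lemma HasBoundedMeans.add (hp : p ∈ Ioo (0 : ℝ) 1)
    (cont_u : ContinuousOn u (ball 0 1)) (cont_v : ContinuousOn v (ball 0 1))
    (hu : HasBoundedMeans p u) (hv : HasBoundedMeans p v) :
    HasBoundedMeans p (fun z => u z + v z) :=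
  ⟨_, fun _ hr => circMeanR_add_le_hardyMean_add hp cont_u cont_v hu hv hr⟩

lemma hardyMean_add_le (hp : p ∈ Ioo (0 : ℝ) 1)
    (cont_u : ContinuousOn u (ball 0 1)) (cont_v : ContinuousOn v (ball 0 1))
    (hu : HasBoundedMeans p u) (hv : HasBoundedMeans p v) :
    hardyMean p (fun z => u z + v z) ≤ hardyMean p u + hardyMean p v :=
  hardyMean_le fun _ hr => circMeanR_add_le_hardyMean_add hp cont_u cont_v hu hv hr

end HardyMean

section FrechetSum

variable {ι : Type*} {a b c : ℕ → ℝ}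

/-- The Fréchet combination `Σ_{n≥1} 2^{-n} aₙ/(1+aₙ)` of a sequence of distances, with indices
shifted to start at `0`. -/
def frechetSum (a : ℕ → ℝ) : ℝ :=
  ∑' n : ℕ, (1 / 2 : ℝ) ^ (n + 1) * (a n / (1 + a n))

lemma frechetSum_term_nonneg (ha : ∀ n, 0 ≤ a n) (n : ℕ) :
    0 ≤ (1 / 2 : ℝ) ^ (n + 1) * (a n / (1 + a n)) := by
  have := ha n
  positivity

lemma frechetSum_term_le (ha : ∀ n, 0 ≤ a n) (n : ℕ) :
    (1 / 2 : ℝ) ^ (n + 1) * (a n / (1 + a n)) ≤ (1 / 2 : ℝ) ^ (n + 1) :=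
  mul_le_of_le_one_right (by positivity) (div_le_one_of_le₀ (by linarith) (by linarith [ha n]))

lemma summable_half_pow_succ : Summable fun n : ℕ => (1 / 2 : ℝ) ^ (n + 1) :=
  (summable_nat_add_iff 1).2 summable_geometric_two

lemma summable_frechetSum_term (ha : ∀ n, 0 ≤ a n) :
    Summable fun n : ℕ => (1 / 2 : ℝ) ^ (n + 1) * (a n / (1 + a n)) :=
  summable_half_pow_succ.of_nonneg_of_le (frechetSum_term_nonneg ha) (frechetSum_term_le ha)

lemma frechetSum_zero : frechetSum 0 = 0 := by
  simp [frechetSum]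

lemma div_one_add_le_add_div_one_add {x y z : ℝ} (hx : 0 ≤ x) (hy : 0 ≤ y) (hz : 0 ≤ z)
    (h : x ≤ y + z) : x / (1 + x) ≤ y / (1 + y) + z / (1 + z) := by
  calc x / (1 + x) ≤ (y + z) / (1 + (y + z)) := by
        rw [div_le_div_iff₀ (by positivity) (by positivity)]
        linarith
    _ = y / (1 + (y + z)) + z / (1 + (y + z)) := add_div ..
    _ ≤ y / (1 + y) + z / (1 + z) := by gcongr <;> linarith

lemma frechetSum_le_add (ha : ∀ n, 0 ≤ a n) (hb : ∀ n, 0 ≤ b n) (hc : ∀ n, 0 ≤ c n)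
    (h : ∀ n, a n ≤ b n + c n) : frechetSum a ≤ frechetSum b + frechetSum c := by
  have hsb := summable_frechetSum_term hb
  have hsc := summable_frechetSum_term hc
  rw [frechetSum, frechetSum, frechetSum, ← hsb.tsum_add hsc]
  refine (summable_frechetSum_term ha).tsum_le_tsum (fun n => ?_) (hsb.add hsc)
  rw [← mul_add]
  gcongr
  exact div_one_add_le_add_div_one_add (ha n) (hb n) (hc n) (h n)

lemma tendsto_frechetSum_zero {l : Filter ι} {a : ι → ℕ → ℝ} (ha : ∀ i n, 0 ≤ a i n)
    (h : ∀ n, Tendsto (a · n) l (𝓝 0)) :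
    Tendsto (fun i => frechetSum (a i)) l (𝓝 0) := by
  have term_tendsto (n : ℕ) : Tendsto
      (fun i => (1 / 2 : ℝ) ^ (n + 1) * (a i n / (1 + a i n))) l (𝓝 0) := by
    simpa using ((h n).div ((h n).const_add 1) (by norm_num)).const_mul ((1 / 2 : ℝ) ^ (n + 1))
  simpa [frechetSum] using tendsto_tsum_of_dominated_convergence summable_half_pow_succ term_tendsto
    (Eventually.of_forall fun i n => by
      rw [Real.norm_of_nonneg (frechetSum_term_nonneg (ha i) n)]
      exact frechetSum_term_le (ha i) n)

lemma tendsto_zero_of_tendsto_frechetSum {l : Filter ι} {a : ι → ℕ → ℝ} (ha : ∀ i n, 0 ≤ a i n)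
    (h : Tendsto (fun i => frechetSum (a i)) l (𝓝 0)) (n : ℕ) :
    Tendsto (a · n) l (𝓝 0) := by
  have ratio_le (i : ι) : a i n / (1 + a i n) ≤ 2 ^ (n + 1) * frechetSum (a i) := by
    have := (summable_frechetSum_term (ha i)).le_tsum n
      fun k _ => frechetSum_term_nonneg (ha i) k
    calc a i n / (1 + a i n)
        = 2 ^ (n + 1) * ((1 / 2 : ℝ) ^ (n + 1) * (a i n / (1 + a i n))) := by
          rw [← mul_assoc, ← mul_pow]; norm_num
      _ ≤ 2 ^ (n + 1) * frechetSum (a i) := by gcongr; exact this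
  have ratio_tendsto : Tendsto (fun i => a i n / (1 + a i n)) l (𝓝 0) :=
    squeeze_zero (fun i => by have := ha i n; positivity) ratio_le
      (by simpa using h.const_mul (2 ^ (n + 1)))
  -- `x ↦ x / (1 - x)` inverts `x ↦ x / (1 + x)` on the nonnegative reals.
  have inverted := ratio_tendsto.div (ratio_tendsto.const_sub 1) (by norm_num)
  simp only [sub_zero, zero_div] at inverted
  refine inverted.congr fun i => ?_
  have : 1 + a i n ≠ 0 := by linarith [ha i n]
  simp only [Pi.div_apply]
  field_simp
  ring

end FrechetSum

lemma ballTopology_dist (α : Type*) [PseudoMetricSpace α] :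
    ballTopology (dist : α → α → ℝ) = UniformSpace.toTopologicalSpace := by
  refine le_antisymm (fun U hU => ?_) (le_generateFrom ?_)
  · refine (@isOpen_iff_forall_mem_open α (ballTopology dist) U).2 fun x hx => ?_
    obtain ⟨ε, hε, hball⟩ := Metric.isOpen_iff.1 hU x hx
    exact ⟨{y | dist x y < ε}, fun y hy => hball (mem_ball'.2 hy),
      .basic _ ⟨x, ε, hε, rfl⟩, by simpa using hε⟩
  · rintro _ ⟨x, ε, -, rfl⟩
    exact isOpen_lt (by fun_prop) (by fun_prop)

namespace HarmV

variable {p : ℝ} (f g h : HarmV)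

lemma continuousOn_re : ContinuousOn (fun z => (f.1 z).re) (ball 0 1) :=
  continuous_re.comp_continuousOn f.2.1.continuousOn

lemma continuousOn_im : ContinuousOn (fun z => (f.1 z).im) (ball 0 1) :=
  continuous_im.comp_continuousOn f.2.1.continuousOn

variable {f} in
lemma hasBoundedMeans_re (hp : p ∈ Ioo (0 : ℝ) 1) : HasBoundedMeans p fun z => (f.1 z).re :=
  f.2.2.2 p hp

lemma hasBoundedMeans_re_add_const_mul (t : ℝ) (hp : p ∈ Ioo (0 : ℝ) 1) :
    HasBoundedMeans p fun z => (f.1 z).re + t * (h.1 z).re :=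
  .add hp f.continuousOn_re (continuousOn_const.mul h.continuousOn_re) (hasBoundedMeans_re hp)
    ((hasBoundedMeans_re hp).const_mul t)

/-- The combination `f + t h` for real `t`, again an element of `⋂_{p<1} h^p`. -/
def addConstMul (t : ℝ) : HarmV :=
  ⟨fun z => f.1 z + t * h.1 z, f.2.1.add (h.2.1.const_mul _), by simp [f.2.2.1, h.2.2.1],
    fun p hp => by
      simp only [add_re, re_ofReal_mul]
      exact f.hasBoundedMeans_re_add_const_mul h t hp⟩

lemma hasBoundedMeans_sub_re (hp : p ∈ Ioo (0 : ℝ) 1) :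
    HasBoundedMeans p fun z => (f.1 z - g.1 z).re := by
  simpa [sub_eq_add_neg] using f.hasBoundedMeans_re_add_const_mul g (-1) hp

lemma circMeanR_sub_re_le_deltaP (hp : p ∈ Ioo (0 : ℝ) 1) {r : ℝ} (hr : r ∈ Ioo (0 : ℝ) 1) :
    circMeanR p (fun z => (f.1 z - g.1 z).re) r ≤ deltaP p f.1 g.1 :=
  (f.hasBoundedMeans_sub_re g hp).circMeanR_le_hardyMean hr

lemma deltaP_triangle (hp : p ∈ Ioo (0 : ℝ) 1) :
    deltaP p f.1 h.1 ≤ deltaP p f.1 g.1 + deltaP p g.1 h.1 := by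
  have cont_sub (f g : HarmV) : ContinuousOn (fun z => (f.1 z - g.1 z).re) (ball 0 1) :=
    continuous_re.comp_continuousOn (f.2.1.sub g.2.1).continuousOn
  have := hardyMean_add_le hp (cont_sub f g) (cont_sub g h) (f.hasBoundedMeans_sub_re g hp)
    (g.hasBoundedMeans_sub_re h hp)
  simp only [← add_re, sub_add_sub_cancel] at this
  exact this

end HarmV

lemma deltaP_nonneg (p : ℝ) (f g : ℂ → ℂ) : 0 ≤ deltaP p f g :=
  hardyMean_nonneg p _

lemma deltaP_add_const_mul_left (p : ℝ) (f h : ℂ → ℂ) (t : ℝ) :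
    deltaP p (fun z => f z + t * h z) f = |t| ^ p * hardyMean p fun z => (h z).re := by
  simp only [deltaP, add_sub_cancel_left, re_ofReal_mul]
  exact hardyMean_const_mul p t _

lemma deltaP_self {p : ℝ} (hp : p ≠ 0) (f : ℂ → ℂ) : deltaP p f f = 0 := by
  simpa [hp] using deltaP_add_const_mul_left p f 0 0

lemma deltaP_comm (p : ℝ) (f g : ℂ → ℂ) : deltaP p f g = deltaP p g f := by
  have := hardyMean_const_mul p (-1) fun z => (f z - g z).re
  simpa [hardyMean, deltaP] using this.symm

/-- The exponents `p_n = n/(n+1)` of the metric, with indices shifted to start at `0`. -/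
def harmExponent (n : ℕ) : ℝ := ((n : ℝ) + 1) / ((n : ℝ) + 2)

lemma harmExponent_mem_Ioo (n : ℕ) : harmExponent n ∈ Ioo (0 : ℝ) 1 :=
  ⟨by rw [harmExponent]; positivity, by rw [harmExponent, div_lt_one (by positivity)]; linarith⟩

lemma harmDist_eq_frechetSum (f g : HarmV) :
    harmDist f g = frechetSum fun n => deltaP (harmExponent n) f.1 g.1 :=
  rfl

instance : PseudoMetricSpace HarmV where
  dist := harmDist
  dist_self f := by
    simp only [harmDist_eq_frechetSum, deltaP_self (harmExponent_mem_Ioo _).1.ne']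
    exact frechetSum_zero
  dist_comm f g := by simp only [harmDist_eq_frechetSum, deltaP_comm _ f.1]
  dist_triangle f g h := frechetSum_le_add (fun _ => deltaP_nonneg ..) (fun _ => deltaP_nonneg ..)
    (fun _ => deltaP_nonneg ..) fun n => f.deltaP_triangle g h (harmExponent_mem_Ioo n)

namespace HarmV

lemma tendsto_nhds_iff {ι : Type*} {l : Filter ι} {F : ι → HarmV} {f : HarmV} :
    Tendsto F l (𝓝 f) ↔ ∀ n, Tendsto (fun i => deltaP (harmExponent n) (F i).1 f.1) l (𝓝 0) :=
  tendsto_iff_dist_tendsto_zero.trans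
    ⟨tendsto_zero_of_tendsto_frechetSum fun _ _ => deltaP_nonneg ..,
      tendsto_frechetSum_zero fun _ _ => deltaP_nonneg ..⟩

lemma tendsto_addConstMul (f h : HarmV) : Tendsto (f.addConstMul h) (𝓝 0) (𝓝 f) := by
  refine tendsto_nhds_iff.2 fun n => ?_
  have hp := (harmExponent_mem_Ioo n).1
  simp only [addConstMul, deltaP_add_const_mul_left]
  have : Continuous fun t : ℝ => |t| ^ harmExponent n * hardyMean (harmExponent n)
      fun z => (h.1 z).re :=
    (continuous_abs.rpow_const fun _ => Or.inr hp.le).mul continuous_const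
  simpa [hp.ne'] using this.tendsto 0

lemma hasBoundedMeans_im_of_addConstMul {q : ℝ} (hq : q ∈ Ioo (0 : ℝ) 1) {f h : HarmV} {t : ℝ}
    (ht : t ≠ 0) (hf : HasBoundedMeans q fun z => (f.1 z).im)
    (hfh : HasBoundedMeans q fun z => ((f.addConstMul h t).1 z).im) :
    HasBoundedMeans q fun z => (h.1 z).im := by
  have := (hfh.add hq (continuousOn_im _) (continuousOn_const.mul f.continuousOn_im)
    (hf.const_mul (-1))).const_mul t⁻¹
  simpa [addConstMul, ht] using this

lemma dense_not_hasBoundedMeans_im {q : ℝ} (hq : q ∈ Ioo (0 : ℝ) 1) {h : HarmV}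
    (hh : ¬ HasBoundedMeans q fun z => (h.1 z).im) :
    Dense {f : HarmV | ¬ HasBoundedMeans q fun z => (f.1 z).im} := by
  intro f
  by_cases hf : HasBoundedMeans q fun z => (f.1 z).im
  · refine mem_closure_of_tendsto (b := 𝓝[≠] 0)
      ((f.tendsto_addConstMul h).mono_left nhdsWithin_le_nhds) ?_
    filter_upwards [self_mem_nhdsWithin] with t ht hfh
    exact hh (hasBoundedMeans_im_of_addConstMul hq ht hf hfh)
  · exact subset_closure hf

end HarmV

section InteriorEstimates

open InnerProductSpace

variable {p R : ℝ} {u : ℂ → ℝ}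

lemma abs_le_mul_circleAverage_abs {c w : ℂ} (hu : HarmonicOnNhd u (closedBall c R))
    (hw : w ∈ ball c R) :
    |u w| ≤ (R + ‖w - c‖) / (R - ‖w - c‖) * Real.circleAverage (fun z => |u z|) c R := by
  have hR : |R| = R := abs_of_pos (pos_of_mem_ball hw)
  have norm_lt : ‖w - c‖ < R := mem_ball_iff_norm.1 hw
  have cont_u : ContinuousOn u (sphere c |R|) := by
    rw [hR]
    exact hu.continuousOn.mono sphere_subset_closedBall
  have cont_kernel : ContinuousOn (re ∘ herglotzRieszKernel c w) (sphere c |R|) := by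
    have : ∀ z ∈ sphere c |R|, z - c - (w - c) ≠ 0 := fun z hz h => by
      rw [hR, mem_sphere_iff_norm] at hz
      rw [sub_eq_zero.1 h] at hz
      exact norm_lt.ne hz
    rw [herglotzRieszKernel_fun_def]
    exact continuous_re.comp_continuousOn (by fun_prop)
  rw [← smul_eq_mul, ← Real.circleAverage_fun_smul,
    ← hu.circleAverage_re_herglotzRieszKernel_smul hw]
  refine Real.abs_circleAverage_le_circleAverage_abs.trans (Real.circleAverage_mono
    (cont_kernel.smul cont_u).abs.circleIntegrable'
    (cont_u.abs.fun_const_smul _).circleIntegrable' fun z hz => ?_)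
  rw [hR] at hz
  have kernel_nonneg : 0 ≤ ((z - c + (w - c)) / (z - c - (w - c))).re :=
    (div_nonneg (sub_nonneg.2 norm_lt.le)
      (add_nonneg (pos_of_mem_ball hw).le (norm_nonneg _))).trans (le_re_herglotzRieszKernel hz hw)
  change |((z - c + (w - c)) / (z - c - (w - c))).re * u z| ≤ _
  rw [abs_mul, abs_of_nonneg kernel_nonneg, smul_eq_mul]
  gcongr
  exact re_herglotzRieszKernel_le hz hw

lemma circleAverage_abs_le_rpow_mul_circMeanR (hp : 0 < p) (hp1 : p ≤ 1)
    (hu : ContinuousOn u (sphere 0 |R|)) {B : ℝ} (hB : ∀ z ∈ sphere 0 |R|, |u z| ^ p ≤ B) :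
    Real.circleAverage (fun z => |u z|) 0 R ≤ B ^ (1 / p - 1) * circMeanR p u R := by
  rw [circMeanR_eq_circleAverage, ← smul_eq_mul, ← Real.circleAverage_fun_smul]
  have exponent_nonneg : 0 ≤ 1 / p - 1 := sub_nonneg.2 ((one_le_div hp).2 hp1)
  refine Real.circleAverage_mono hu.abs.circleIntegrable'
    ((hu.abs.rpow_const fun _ _ => Or.inr hp.le).fun_const_smul _).circleIntegrable'
    fun z hz => ?_
  calc |u z| = (|u z| ^ p) ^ (1 / p - 1) * |u z| ^ p := by
        rw [← Real.rpow_add_one' (by positivity) (by simp [hp.ne']), sub_add_cancel, one_div,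
          Real.rpow_rpow_inv (abs_nonneg _) hp.ne']
    _ ≤ B ^ (1 / p - 1) * |u z| ^ p := by
        gcongr
        exact hB z hz

lemma abs_le_of_weighted_abs_rpow_le (hp : 0 < p) (hp1 : p ≤ 1)
    (hu : HarmonicOnNhd u (closedBall 0 R)) {δ M : ℝ} (hδ : ∀ s ∈ Ioo 0 R, circMeanR p u s ≤ δ)
    (hM : ∀ z ∈ closedBall 0 R, (R - ‖z‖) * |u z| ^ p ≤ M) {z : ℂ} (hz : z ∈ ball 0 R) :
    |u z| ≤ 4 * R / (R - ‖z‖) * ((2 * (M / (R - ‖z‖))) ^ (1 / p - 1) * δ) := by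
  have norm_lt : ‖z‖ < R := mem_ball_zero_iff.1 hz
  have norm_nonneg := norm_nonneg z
  obtain ⟨s, hs⟩ : ∃ s, s = (R + ‖z‖) / 2 := ⟨_, rfl⟩
  have hs_mem : s ∈ Ioo 0 R := ⟨by linarith, by linarith⟩
  have hu_s : HarmonicOnNhd u (closedBall 0 s) := fun w hw =>
    hu w (closedBall_subset_closedBall hs_mem.2.le hw)
  have bound_on_sphere : ∀ w ∈ sphere 0 |s|, |u w| ^ p ≤ 2 * (M / (R - ‖z‖)) := by
    intro w hw
    have norm_w : ‖w‖ = s := by rwa [abs_of_pos hs_mem.1, mem_sphere_zero_iff_norm] at hw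
    have := hM w (mem_closedBall_zero_iff.2 (norm_w.trans_le hs_mem.2.le))
    rw [norm_w, hs, show R - (R + ‖z‖) / 2 = (R - ‖z‖) / 2 by ring] at this
    rw [← mul_div_assoc, le_div_iff₀ (by linarith)]
    linarith
  have cont_u : ContinuousOn u (sphere 0 |s|) := by
    rw [abs_of_pos hs_mem.1]
    exact hu_s.continuousOn.mono sphere_subset_closedBall
  have doubled_nonneg : 0 ≤ 2 * (M / (R - ‖z‖)) := by
    have := sub_pos.2 norm_lt
    have : 0 ≤ M := (hM z (ball_subset_closedBall hz)).trans' (by positivity)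
    positivity
  have mean_le := (circleAverage_abs_le_rpow_mul_circMeanR hp hp1 cont_u bound_on_sphere).trans
    (mul_le_mul_of_nonneg_left (hδ s hs_mem) (Real.rpow_nonneg doubled_nonneg _))
  have ratio_le : (s + ‖z - 0‖) / (s - ‖z - 0‖) ≤ 4 * R / (R - ‖z‖) := by
    rw [sub_zero, div_le_div_iff₀ (by linarith) (by linarith)]
    nlinarith
  exact (abs_le_mul_circleAverage_abs hu_s (mem_ball_zero_iff.2 (by linarith))).trans
    (mul_le_mul ratio_le mean_le (Real.circleAverage_nonneg_of_nonneg fun _ _ => abs_nonneg _)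
      (div_nonneg (by linarith) (by linarith)))

lemma le_of_rpow_le_mul_rpow_sub_one {x k A : ℝ} (hx : 0 < x) (h : x ^ k ≤ A * x ^ (k - 1)) :
    x ≤ A := by
  rw [← sub_add_cancel k 1, Real.rpow_add_one hx.ne', sub_add_cancel, mul_comm A] at h
  exact le_of_mul_le_mul_left h (Real.rpow_pos_of_pos hx _)

/- The maximum `M` of `(R - ‖z‖) |u z| ^ p` is controlled by itself: averaging over the circle
halfway between the maximum point and the boundary costs `(2 M / (R - ‖z‖)) ^ (1 / p - 1)`, and this
power of `M` cancels. -/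
lemma sub_norm_mul_abs_rpow_le_of_circMeanR_le (hp : 0 < p) (hp1 : p ≤ 1)
    (hu : HarmonicOnNhd u (closedBall 0 R)) {δ : ℝ}
    (hδ : ∀ s ∈ Ioo 0 R, circMeanR p u s ≤ δ) {z : ℂ} (hz : z ∈ ball 0 R) :
    (R - ‖z‖) * |u z| ^ p ≤ 2 ^ (1 / p + 1) * R * δ := by
  have cont : ContinuousOn (fun w => (R - ‖w‖) * |u w| ^ p) (closedBall 0 R) :=
    (continuousOn_const.sub continuousOn_id.norm).mul
      (hu.continuousOn.abs.rpow_const fun _ _ => Or.inr hp.le)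
  obtain ⟨z₀, hz₀, hmax⟩ := (isCompact_closedBall (0 : ℂ) R).exists_isMaxOn
    ⟨z, ball_subset_closedBall hz⟩ cont
  refine (hmax (ball_subset_closedBall hz)).trans ?_
  have hR : 0 < R := pos_of_mem_ball hz
  rcases le_or_gt ((R - ‖z₀‖) * |u z₀| ^ p) 0 with hM | hM
  · have : 0 ≤ δ := (circMeanR_nonneg p u (R / 2)).trans (hδ _ ⟨by linarith, by linarith⟩)
    exact hM.trans (by positivity)
  have norm_le : ‖z₀‖ ≤ R := mem_closedBall_zero_iff.1 hz₀
  have gap_pos : 0 < R - ‖z₀‖ := (sub_nonneg.2 norm_le).lt_of_ne' (left_ne_zero_of_mul hM.ne')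
  have abs_rpow_pos : 0 < |u z₀| ^ p := pos_of_mul_pos_right hM gap_pos.le
  have self_bound := abs_le_of_weighted_abs_rpow_le hp hp1 hu hδ hmax
    (mem_ball_zero_iff.2 (sub_pos.1 gap_pos))
  rw [mul_div_cancel_left₀ _ gap_pos.ne', Real.mul_rpow two_pos.le abs_rpow_pos.le] at self_bound
  have abs_rpow_le : |u z₀| ^ p ≤ 4 * R / (R - ‖z₀‖) * (2 ^ (1 / p - 1) * δ) := by
    refine le_of_rpow_le_mul_rpow_sub_one (k := 1 / p) abs_rpow_pos ?_
    rw [one_div, Real.rpow_rpow_inv (abs_nonneg _) hp.ne', ← one_div]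
    linarith
  have two_pow : (2 : ℝ) ^ (1 / p + 1) = 4 * 2 ^ (1 / p - 1) := by
    rw [show 1 / p + 1 = 2 + (1 / p - 1) by ring, Real.rpow_add two_pos]
    norm_num
  rw [div_mul_eq_mul_div, le_div_iff₀ gap_pos] at abs_rpow_le
  rw [two_pow]
  linarith

variable {f : ℂ → ℂ}

lemma norm_le_of_abs_re_le (hf : DifferentiableOn ℂ f (ball 0 R)) (hf0 : (f 0).im = 0) {B : ℝ}
    (hB : ∀ z ∈ ball 0 R, |(f z).re| ≤ B) {z : ℂ} (hz : z ∈ ball 0 R) :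
    ‖f z‖ ≤ (R + 3 * ‖z‖) / (R - ‖z‖) * B := by
  have hR : 0 < R := pos_of_mem_ball hz
  have gap_pos : 0 < R - ‖z‖ := sub_pos.2 (mem_ball_zero_iff.1 hz)
  have norm_f0 : ‖f 0‖ ≤ B := by
    rw [← abs_re_eq_norm.2 hf0]
    exact hB 0 (mem_ball_self hR)
  have bound (M : ℝ) (hM : B < M) : ‖f z‖ ≤ (R + 3 * ‖z‖) / (R - ‖z‖) * M := by
    have := borelCaratheodory ((norm_nonneg _).trans_lt (norm_f0.trans_lt hM)) hf
      (fun w hw => (le_abs_self _).trans ((hB w hw).trans hM.le)) hR hz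
    calc ‖f z‖ ≤ 2 * M * ‖z‖ / (R - ‖z‖) + M * (R + ‖z‖) / (R - ‖z‖) :=
          this.trans (by gcongr; exact norm_f0.trans hM.le)
      _ = (R + 3 * ‖z‖) / (R - ‖z‖) * M := by ring
  have coeff_pos : 0 < (R + 3 * ‖z‖) / (R - ‖z‖) := by positivity
  rw [← div_le_iff₀' coeff_pos]
  exact le_of_forall_gt_imp_ge_of_dense fun M hM => (div_le_iff₀' coeff_pos).2 (bound M hM)

lemma exists_norm_le_mul_rpow_of_circMeanR_re_le (hp : 0 < p) (hp1 : p ≤ 1) {r : ℝ}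
    (hr : r ∈ Ioo (0 : ℝ) 1) :
    ∃ K, ∀ (f : ℂ → ℂ) (δ : ℝ), DifferentiableOn ℂ f (ball 0 1) → (f 0).im = 0 →
      (∀ s ∈ Ioo (0 : ℝ) 1, circMeanR p (fun z => (f z).re) s ≤ δ) →
      ∀ z, ‖z‖ = r → ‖f z‖ ≤ K * δ ^ (1 / p) := by
  obtain ⟨R, hrR, hR1⟩ := exists_between hr.2
  obtain ⟨ρ, hrρ, hρR⟩ := exists_between hrR
  refine ⟨(ρ + 3 * r) / (ρ - r) * (2 ^ (1 / p + 1) * R / (R - ρ)) ^ (1 / p),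
    fun f δ hf hf0 hδ z hz => ?_⟩
  have harm : HarmonicOnNhd (fun w => (f w).re) (closedBall 0 R) := fun w hw =>
    (hf.analyticAt (isOpen_ball.mem_nhds (closedBall_subset_ball hR1 hw))).harmonicAt_re
  have hδ0 : 0 ≤ δ := (circMeanR_nonneg ..).trans (hδ r hr)
  have hR0 : 0 < R := hr.1.trans hrR
  have gap_pos : 0 < R - ρ := sub_pos.2 hρR
  have re_le : ∀ w ∈ ball 0 ρ, |(f w).re| ≤ (2 ^ (1 / p + 1) * R / (R - ρ) * δ) ^ (1 / p) := by
    intro w hw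
    have norm_lt : ‖w‖ < ρ := mem_ball_zero_iff.1 hw
    have key := sub_norm_mul_abs_rpow_le_of_circMeanR_le hp hp1 harm
      (fun s hs => hδ s ⟨hs.1, hs.2.trans hR1⟩) (ball_subset_ball hρR.le hw)
    rw [one_div, Real.le_rpow_inv_iff_of_pos (abs_nonneg _) (by positivity) hp, ← one_div,
      div_mul_eq_mul_div, le_div_iff₀' gap_pos]
    exact key.trans' (by gcongr)
  have := norm_le_of_abs_re_le (hf.mono (ball_subset_ball (hρR.trans hR1).le)) hf0 re_le
    (mem_ball_zero_iff.2 (hz.trans_lt hrρ))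
  rwa [hz, Real.mul_rpow (by positivity) hδ0, ← mul_assoc] at this

end InteriorEstimates

namespace HarmV

variable {q : ℝ}

lemma continuous_circMeanR_im (hq : q ∈ Ioo (0 : ℝ) 1) {r : ℝ} (hr : r ∈ Ioo (0 : ℝ) 1) :
    Continuous fun f : HarmV => circMeanR q (fun z => (f.1 z).im) r := by
  obtain ⟨hp, hp1⟩ := harmExponent_mem_Ioo 0
  obtain ⟨K, hK⟩ := exists_norm_le_mul_rpow_of_circMeanR_re_le hp hp1.le hr
  refine continuous_iff_continuousAt.2 fun f => tendsto_iff_dist_tendsto_zero.2 ?_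
  have cont_im (g : HarmV) : ContinuousOn (fun z => (g.1 z).im) (sphere 0 |r|) :=
    g.continuousOn_im.mono (sphere_abs_subset_unit_ball hr)
  have norm_sub_le (g : HarmV) (z : ℂ) (hz : ‖z‖ = r) :
      ‖g.1 z - f.1 z‖ ≤ K * deltaP (harmExponent 0) g.1 f.1 ^ (1 / harmExponent 0) :=
    hK (fun z => g.1 z - f.1 z) _ (g.2.1.sub f.2.1) (by simp [g.2.2.1, f.2.2.1])
      (fun s hs => g.circMeanR_sub_re_le_deltaP f ⟨hp, hp1⟩ hs) z hz
  have dist_le (g : HarmV) :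
      dist (circMeanR q (fun z => (g.1 z).im) r) (circMeanR q (fun z => (f.1 z).im) r) ≤
        (K * deltaP (harmExponent 0) g.1 f.1 ^ (1 / harmExponent 0)) ^ q := by
    refine (abs_circMeanR_sub_le hq.1 hq.2.le (cont_im g) (cont_im f)).trans
      (circMeanR_le_rpow_of_abs_le hq.1.le ((cont_im g).sub (cont_im f)) fun z hz => ?_)
    rw [abs_of_pos hr.1, mem_sphere_zero_iff_norm] at hz
    exact (abs_im_le_norm (g.1 z - f.1 z)).trans (norm_sub_le g z hz)
  refine squeeze_zero (fun _ => dist_nonneg) dist_le ?_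
  have delta_tendsto := tendsto_nhds_iff.1 (tendsto_id (x := 𝓝 f)) 0
  have cont : Continuous fun δ : ℝ => (K * δ ^ (1 / harmExponent 0)) ^ q :=
    (continuous_const.mul (continuous_id.rpow_const fun _ => Or.inr (by positivity))).rpow_const
      fun _ => Or.inr hq.1.le
  simpa [hp.ne', hq.1.ne', Function.comp_def] using (cont.tendsto 0).comp delta_tendsto

lemma isGδ_not_hasBoundedMeans_im (hq : q ∈ Ioo (0 : ℝ) 1) :
    IsGδ {f : HarmV | ¬ HasBoundedMeans q fun z => (f.1 z).im} := by
  have eq_iInter : {f : HarmV | ¬ HasBoundedMeans q fun z => (f.1 z).im} =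
      ⋂ n : ℕ, ⋃ r ∈ Ioo (0 : ℝ) 1, {f | (n : ℝ) < circMeanR q (fun z => (f.1 z).im) r} := by
    ext f
    simp only [HasBoundedMeans, mem_ofPred_eq, mem_iInter, mem_iUnion, not_exists, not_forall,
      not_le, exists_prop]
    refine ⟨fun h n => h n, fun h C => ?_⟩
    obtain ⟨n, hn⟩ := exists_nat_ge C
    obtain ⟨r, hr, hlt⟩ := h n
    exact ⟨r, hr, hn.trans_lt hlt⟩
  rw [eq_iInter]
  exact .iInter_of_isOpen fun n => isOpen_biUnion fun r hr =>
    isOpen_lt continuous_const (continuous_circMeanR_im hq hr)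

end HarmV

section OddKernel

lemma cos_mul_norm_rpow_le_re_cpow {w : ℂ} (hw : 0 ≤ w.re) {a : ℝ} (ha : |a| ≤ 1) :
    Real.cos (a * (Real.pi / 2)) * ‖w‖ ^ a ≤ (w ^ (a : ℂ)).re := by
  rw [cpow_ofReal_re, mul_comm]
  gcongr
  have arg_le : |arg w| ≤ Real.pi / 2 := abs_arg_le_pi_div_two_iff.2 hw
  rw [← Real.cos_abs (arg w * a), ← Real.cos_abs (a * _), abs_mul, abs_mul, mul_comm |arg w|,
    abs_of_pos Real.pi_div_two_pos]
  refine Real.cos_le_cos_of_nonneg_of_le_pi (by positivity) ?_ (by gcongr)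
  nlinarith [Real.pi_pos]

/- Kolmogorov's argument: for `g` with values in the right half-plane, `‖g‖ ^ a` is comparable with
the harmonic function `Re (g ^ a)`, whose circle average is its value at the centre. -/
lemma cos_mul_circleAverage_norm_rpow_le {g : ℂ → ℂ} {c : ℂ} {R : ℝ}
    (hg : DifferentiableOn ℂ g (closedBall c |R|)) (hre : ∀ z ∈ closedBall c |R|, 0 < (g z).re)
    {a : ℝ} (ha : |a| ≤ 1) :
    Real.cos (a * (Real.pi / 2)) * Real.circleAverage (fun z => ‖g z‖ ^ a) c R ≤ ‖g c‖ ^ a := by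
  have diff_cpow : DifferentiableOn ℂ (fun z => g z ^ (a : ℂ)) (closedBall c |R|) :=
    hg.cpow_const fun z hz => Or.inl (hre z hz)
  have cont_cpow : ContinuousOn (fun z => g z ^ (a : ℂ)) (sphere c |R|) :=
    diff_cpow.continuousOn.mono sphere_subset_closedBall
  have cont_norm : ContinuousOn (fun z => ‖g z‖ ^ a) (sphere c |R|) :=
    (hg.continuousOn.mono sphere_subset_closedBall).norm.rpow_const fun z hz => Or.inl
      (norm_ne_zero_iff.2 fun h => by simpa [h] using hre z (sphere_subset_closedBall hz))
  have mean_value : Real.circleAverage (fun z => (g z ^ (a : ℂ)).re) c R = (g c ^ (a : ℂ)).re := by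
    rw [← (diff_cpow.diffContOnCl_ball subset_rfl).circleAverage]
    exact reCLM.circleAverage_comp_comm cont_cpow.circleIntegrable'
  rw [← smul_eq_mul, ← Real.circleAverage_fun_smul]
  calc Real.circleAverage (fun z => Real.cos (a * (Real.pi / 2)) • ‖g z‖ ^ a) c R
      ≤ Real.circleAverage (fun z => (g z ^ (a : ℂ)).re) c R :=
        Real.circleAverage_mono (cont_norm.fun_const_smul _).circleIntegrable'
          (continuous_re.comp_continuousOn cont_cpow).circleIntegrable' fun z hz =>
          cos_mul_norm_rpow_le_re_cpow (hre z (sphere_subset_closedBall hz)).le ha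
    _ = (g c ^ (a : ℂ)).re := mean_value
    _ ≤ ‖g c ^ (a : ℂ)‖ := re_le_norm _
    _ ≤ ‖g c‖ ^ a := norm_cpow_real .. |>.le

/-- The kernel `w / (1 - w²) = w + w³ + w⁵ + ⋯`. Its real part is a quarter of the difference
of two Poisson kernels, hence small in mean of order `p < 1`, while its modulus stays bounded below
near the unit circle. -/
def oddKernel (w : ℂ) : ℂ := w / (1 - w ^ 2)

variable {w : ℂ}

lemma one_sub_norm_sq_le_norm_one_sub_sq (w : ℂ) : 1 - ‖w‖ ^ 2 ≤ ‖1 - w ^ 2‖ := by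
  rw [← norm_pow, ← norm_one (α := ℂ)]
  exact norm_sub_norm_le 1 (w ^ 2)

lemma one_sub_sq_re_pos (hw : ‖w‖ < 1) : 0 < (1 - w ^ 2).re := by
  have : (w ^ 2).re ≤ ‖w‖ ^ 2 := (re_le_norm _).trans_eq (norm_pow w 2)
  rw [sub_re, one_re]
  nlinarith [norm_nonneg w]

lemma one_sub_sq_ne_zero (hw : ‖w‖ < 1) : 1 - w ^ 2 ≠ 0 := fun h => by
  simpa [h] using one_sub_sq_re_pos hw

lemma differentiableOn_oddKernel : DifferentiableOn ℂ oddKernel (ball 0 1) :=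
  differentiableOn_id.div (by fun_prop) fun _ hw => one_sub_sq_ne_zero (mem_ball_zero_iff.1 hw)

lemma norm_oddKernel_le (hw : ‖w‖ < 1) : ‖oddKernel w‖ ≤ ‖w‖ / (1 - ‖w‖) := by
  rw [oddKernel, norm_div]
  have := sub_pos.2 hw
  gcongr
  refine (one_sub_norm_sq_le_norm_one_sub_sq w).trans' ?_
  nlinarith [norm_nonneg w]

lemma one_quarter_le_norm_oddKernel (hw : 1 / 2 ≤ ‖w‖) (hw1 : ‖w‖ < 1) :
    1 / 4 ≤ ‖oddKernel w‖ := by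
  have denominator_le : ‖1 - w ^ 2‖ ≤ 2 := by
    have := norm_sub_le 1 (w ^ 2)
    rw [norm_one, norm_pow] at this
    nlinarith [norm_nonneg w]
  rw [oddKernel, norm_div, le_div_iff₀ (norm_pos_iff.2 (one_sub_sq_ne_zero hw1))]
  linarith

lemma oddKernel_re (w : ℂ) : (oddKernel w).re = w.re * (1 - ‖w‖ ^ 2) / ‖1 - w ^ 2‖ ^ 2 := by
  rw [oddKernel, div_re, ← normSq_eq_norm_sq, ← normSq_eq_norm_sq, ← add_div]
  congr 1
  simp [normSq_apply, pow_two]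
  ring

lemma abs_oddKernel_re_rpow_le (hw : ‖w‖ < 1) {p a : ℝ} (hp : 0 ≤ p) (ha : a ≤ 2 * p) :
    |(oddKernel w).re| ^ p ≤ ‖w‖ ^ p * (1 - ‖w‖ ^ 2) ^ (a - p) * ‖1 - w ^ 2‖ ^ (-a) := by
  have gap_pos : 0 < 1 - ‖w‖ ^ 2 := by nlinarith [norm_nonneg w]
  have denominator_pos : 0 < ‖1 - w ^ 2‖ := norm_pos_iff.2 (one_sub_sq_ne_zero hw)
  have abs_re_le : |(oddKernel w).re| ≤ ‖w‖ * (1 - ‖w‖ ^ 2) / ‖1 - w ^ 2‖ ^ 2 := by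
    rw [oddKernel_re, abs_div, abs_mul, abs_of_pos gap_pos, abs_of_pos (pow_pos denominator_pos 2)]
    gcongr
    exact abs_re_le_norm w
  calc |(oddKernel w).re| ^ p
      ≤ (‖w‖ * (1 - ‖w‖ ^ 2) / ‖1 - w ^ 2‖ ^ 2) ^ p := by gcongr
    _ = ‖w‖ ^ p * (1 - ‖w‖ ^ 2) ^ p * (‖1 - w ^ 2‖ ^ (a - 2 * p) * ‖1 - w ^ 2‖ ^ (-a)) := by
        rw [Real.div_rpow (by positivity) (by positivity), Real.mul_rpow (by positivity) gap_pos.le,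
          ← Real.rpow_add denominator_pos, div_eq_mul_inv, ← Real.rpow_natCast_mul (norm_nonneg _),
          ← Real.rpow_neg (norm_nonneg _)]
        congr 2
        push_cast
        ring
    _ ≤ ‖w‖ ^ p * (1 - ‖w‖ ^ 2) ^ p * ((1 - ‖w‖ ^ 2) ^ (a - 2 * p) * ‖1 - w ^ 2‖ ^ (-a)) := by
        gcongr ?_ * (?_ * _)
        exact Real.rpow_le_rpow_of_nonpos gap_pos (one_sub_norm_sq_le_norm_one_sub_sq w)
          (by linarith)
    _ = ‖w‖ ^ p * (1 - ‖w‖ ^ 2) ^ (a - p) * ‖1 - w ^ 2‖ ^ (-a) := by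
        rw [show a - p = p + (a - 2 * p) by ring, Real.rpow_add gap_pos]
        ring

lemma cos_mul_pi_div_two_pos {a : ℝ} (ha0 : 0 ≤ a) (ha1 : a < 1) :
    0 < Real.cos (a * (Real.pi / 2)) :=
  Real.cos_pos_of_mem_Ioo ⟨by nlinarith [Real.pi_pos], by nlinarith [Real.pi_pos]⟩

lemma norm_pow_lt_one (hw : ‖w‖ < 1) {k : ℕ} (hk : k ≠ 0) : ‖w ^ k‖ < 1 := by
  rw [norm_pow]
  exact pow_lt_one₀ (norm_nonneg w) hw hk

lemma circMeanR_oddKernel_pow_re_le {r : ℝ} (hr : r ∈ Ioo (0 : ℝ) 1) {k : ℕ} (hk : k ≠ 0)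
    {p a : ℝ} (hp : 0 ≤ p) (ha0 : 0 ≤ a) (ha1 : a < 1) (ha : a ≤ 2 * p) :
    circMeanR p (fun z => (oddKernel (z ^ k)).re) r ≤
      (Real.cos (a * (Real.pi / 2)))⁻¹ * ((r ^ k) ^ p * (1 - (r ^ k) ^ 2) ^ (a - p)) := by
  have norm_lt {z : ℂ} (hz : z ∈ closedBall 0 |r|) : ‖z ^ k‖ < 1 := by
    rw [abs_of_pos hr.1, mem_closedBall_zero_iff] at hz
    exact norm_pow_lt_one (hz.trans_lt hr.2) hk
  have cos_pos := cos_mul_pi_div_two_pos ha0 ha1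
  have kolmogorov := cos_mul_circleAverage_norm_rpow_le (g := fun z : ℂ => 1 - (z ^ k) ^ 2)
    (c := 0) (R := r) (by fun_prop) (fun z hz => one_sub_sq_re_pos (norm_lt hz)) (a := -a)
    (by rw [abs_neg, abs_of_nonneg ha0]; exact ha1.le)
  simp only [neg_mul, Real.cos_neg, ne_eq, hk, not_false_eq_true, zero_pow, two_ne_zero, sub_zero,
    norm_one, Real.one_rpow] at kolmogorov
  have cont_kernel : ContinuousOn (fun z : ℂ => (oddKernel (z ^ k)).re) (sphere 0 |r|) :=
    continuous_re.comp_continuousOn (differentiableOn_oddKernel.continuousOn.comp (by fun_prop)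
      fun z hz => mem_ball_zero_iff.2 (norm_lt (sphere_subset_closedBall hz)))
  have cont_norm : ContinuousOn (fun z : ℂ => ‖1 - (z ^ k) ^ 2‖ ^ (-a)) (sphere 0 |r|) :=
    ContinuousOn.rpow_const (by fun_prop) fun z hz =>
      Or.inl (norm_ne_zero_iff.2 (one_sub_sq_ne_zero (norm_lt (sphere_subset_closedBall hz))))
  have gap_pos : 0 < 1 - (r ^ k) ^ 2 := by
    have := pow_lt_one₀ hr.1.le hr.2 hk
    nlinarith [pow_pos hr.1 k]
  calc circMeanR p (fun z => (oddKernel (z ^ k)).re) r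
      ≤ Real.circleAverage (fun z => ((r ^ k) ^ p * (1 - (r ^ k) ^ 2) ^ (a - p)) •
          ‖1 - (z ^ k) ^ 2‖ ^ (-a)) 0 r := by
        rw [circMeanR_eq_circleAverage]
        refine Real.circleAverage_mono (circleIntegrable_abs_rpow hp cont_kernel)
          (cont_norm.fun_const_smul _).circleIntegrable' fun z hz => ?_
        have := abs_oddKernel_re_rpow_le (norm_lt (sphere_subset_closedBall hz)) hp ha
        rwa [norm_pow, mem_sphere_zero_iff_norm.1 hz, abs_of_pos hr.1] at this
    _ ≤ (Real.cos (a * (Real.pi / 2)))⁻¹ * ((r ^ k) ^ p * (1 - (r ^ k) ^ 2) ^ (a - p)) := by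
        rw [Real.circleAverage_fun_smul, smul_eq_mul, mul_comm]
        have := hr.1
        gcongr
        rwa [← one_div, le_div_iff₀' cos_pos]

end OddKernel

section LacunarySums

lemma pow_mem_Ioo_zero_one {x : ℝ} (hx : x ∈ Ioo (0 : ℝ) 1) {k : ℕ} (hk : k ≠ 0) :
    x ^ k ∈ Ioo (0 : ℝ) 1 :=
  ⟨pow_pos hx.1 k, pow_lt_one₀ hx.1.le hx.2 hk⟩

lemma mul_one_sub_rpow_le_sub {b x : ℝ} (hb : b ∈ Ioo (0 : ℝ) 1) (hx : x ∈ Ioo (0 : ℝ) 1) :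
    (2 ^ b - 1) * (x * (1 - x) ^ b) ≤ (1 - x ^ 2) ^ b - (1 - x) ^ b := by
  have gap_pos : 0 < 1 - x := sub_pos.2 hx.2
  have concave : 1 + (2 ^ b - 1) * x ≤ (1 + x) ^ b := by
    have := (Real.concaveOn_rpow hb.1.le hb.2.le).2 (mem_Ici.2 one_pos.le) (mem_Ici.2 two_pos.le)
      gap_pos.le hx.1.le (sub_add_cancel 1 x)
    simp only [smul_eq_mul, Real.one_rpow] at this
    calc 1 + (2 ^ b - 1) * x = (1 - x) * 1 + x * 2 ^ b := by ring
      _ ≤ ((1 - x) * 1 + x * 2) ^ b := this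
      _ = (1 + x) ^ b := by ring_nf
  rw [show 1 - x ^ 2 = (1 + x) * (1 - x) by ring, Real.mul_rpow (by linarith [hx.1]) gap_pos.le]
  have := mul_le_mul_of_nonneg_right concave (Real.rpow_nonneg gap_pos.le b)
  linarith

lemma sum_pow_two_pow_mul_one_sub_rpow_le {b s : ℝ} (hb : b ∈ Ioo (0 : ℝ) 1)
    (hs : s ∈ Ioo (0 : ℝ) 1) (N : ℕ) :
    ∑ n ∈ Finset.range N, s ^ 2 ^ n * (1 - s ^ 2 ^ n) ^ b ≤ (2 ^ b - 1)⁻¹ := by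
  have coeff_pos : 0 < (2 : ℝ) ^ b - 1 := sub_pos.2 (Real.one_lt_rpow one_lt_two hb.1)
  have pow_mem (n : ℕ) : s ^ 2 ^ n ∈ Ioo (0 : ℝ) 1 :=
    pow_mem_Ioo_zero_one hs (by positivity)
  rw [← one_div, le_div_iff₀' coeff_pos, Finset.mul_sum]
  calc ∑ n ∈ Finset.range N, (2 ^ b - 1) * (s ^ 2 ^ n * (1 - s ^ 2 ^ n) ^ b)
      ≤ ∑ n ∈ Finset.range N, ((1 - s ^ 2 ^ (n + 1)) ^ b - (1 - s ^ 2 ^ n) ^ b) := by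
        refine Finset.sum_le_sum fun n _ => ?_
        rw [pow_succ 2 n, pow_mul]
        exact mul_one_sub_rpow_le_sub hb (pow_mem n)
    _ = (1 - s ^ 2 ^ N) ^ b - (1 - s ^ 2 ^ 0) ^ b :=
        Finset.sum_range_sub (fun n => (1 - s ^ 2 ^ n) ^ b) N
    _ ≤ 1 - 0 := by
        gcongr
        · exact Real.rpow_le_one (by linarith [(pow_mem N).2]) (by linarith [(pow_mem N).1]) hb.1.le
        · exact Real.rpow_nonneg (by linarith [(pow_mem 0).2]) b
    _ = 1 := sub_zero 1

lemma one_sub_sq_le_two_div_mul_one_sub_rpow {p x : ℝ} (hp : p ∈ Ioo (0 : ℝ) 1)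
    (hx : x ∈ Ioo (0 : ℝ) 1) : 1 - x ^ 2 ≤ 2 / p * (1 - x ^ p) := by
  have bernoulli : (1 + (x - 1)) ^ p ≤ 1 + p * (x - 1) :=
    rpow_one_add_le_one_add_mul_self (by linarith [hx.1]) hp.1.le hp.2.le
  rw [add_sub_cancel] at bernoulli
  rw [div_mul_eq_mul_div, le_div_iff₀ hp.1]
  nlinarith [hp.1, hx.1, hx.2, mul_pos hp.1 (sub_pos.2 hx.2)]

lemma exists_sum_circMeanR_oddKernel_re_le {p : ℝ} (hp : p ∈ Ioo (0 : ℝ) 1) :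
    ∃ C, ∀ r ∈ Ioo (0 : ℝ) 1, ∀ N : ℕ,
      ∑ n ∈ Finset.range N, circMeanR p (fun z => (oddKernel (z ^ 2 ^ n)).re) r ≤ C := by
  obtain ⟨a, hpa, ha⟩ : ∃ a, p < a ∧ a < min 1 (2 * p) :=
    exists_between (lt_min hp.2 (by linarith [hp.1]))
  obtain ⟨ha1, ha2⟩ := lt_min_iff.1 ha
  have ha0 : 0 < a := hp.1.trans hpa
  have hb : a - p ∈ Ioo (0 : ℝ) 1 := ⟨by linarith, by linarith [hp.1]⟩
  have cos_pos := cos_mul_pi_div_two_pos ha0.le ha1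
  refine ⟨(Real.cos (a * (Real.pi / 2)))⁻¹ * ((2 / p) ^ (a - p) * (2 ^ (a - p) - 1)⁻¹),
    fun r hr N => ?_⟩
  have hs : r ^ p ∈ Ioo (0 : ℝ) 1 :=
    ⟨Real.rpow_pos_of_pos hr.1 p, Real.rpow_lt_one hr.1.le hr.2 hp.1⟩
  have hp0 := hp.1
  have term_le (n : ℕ) : circMeanR p (fun z => (oddKernel (z ^ 2 ^ n)).re) r ≤
      (Real.cos (a * (Real.pi / 2)))⁻¹ * ((2 / p) ^ (a - p) *
        ((r ^ p) ^ 2 ^ n * (1 - (r ^ p) ^ 2 ^ n) ^ (a - p))) := by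
    have pow_mem : r ^ 2 ^ n ∈ Ioo (0 : ℝ) 1 := pow_mem_Ioo_zero_one hr (by positivity)
    have pow_comm : (r ^ p) ^ 2 ^ n = (r ^ 2 ^ n) ^ p := by
      rw [← Real.rpow_mul_natCast hr.1.le, ← Real.rpow_natCast_mul hr.1.le, mul_comm]
    have gap_pos : 0 < 1 - (r ^ 2 ^ n) ^ p :=
      sub_pos.2 (Real.rpow_lt_one pow_mem.1.le pow_mem.2 hp0)
    refine (circMeanR_oddKernel_pow_re_le hr (by positivity) hp0.le ha0.le ha1 ha2.le).trans ?_
    rw [pow_comm, mul_left_comm ((2 / p) ^ _), ← Real.mul_rpow (by positivity) gap_pos.le]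
    have : 0 ≤ 1 - (r ^ 2 ^ n) ^ 2 := by nlinarith [pow_mem.1, pow_mem.2]
    have := one_sub_sq_le_two_div_mul_one_sub_rpow hp pow_mem
    have := pow_mem.1
    gcongr
  refine (Finset.sum_le_sum fun n _ => term_le n).trans ?_
  rw [← Finset.mul_sum, ← Finset.mul_sum]
  gcongr
  exact sum_pow_two_pow_mul_one_sub_rpow_le hb hs N

end LacunarySums

section LacunarySeries

variable {c : ℕ → SignType} {z : ℂ} {R r : ℝ}

/-- The lacunary series `∑ cₙ z^(2ⁿ) / (1 - z^(2ⁿ⁺¹))` on the unit disc. The space `ℕ → SignType` of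
coefficients carries the product topology, in which Baire's theorem applies; the coefficient `0` is
allowed so that truncated series are again of this form. -/
def lacunarySeries (c : ℕ → SignType) (z : ℂ) : ℂ := ∑' n, (c n : ℂ) * oddKernel (z ^ 2 ^ n)

lemma norm_signType_coe_le_one (s : SignType) : ‖(s : ℂ)‖ ≤ 1 := by
  cases s <;> simp

lemma norm_oddKernel_pow_two_pow_le (hz : ‖z‖ ≤ R) (hR : R < 1) (n : ℕ) :
    ‖oddKernel (z ^ 2 ^ n)‖ ≤ R ^ n / (1 - R) := by
  have hR0 : 0 ≤ R := (norm_nonneg z).trans hz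
  have norm_le : ‖z ^ 2 ^ n‖ ≤ R ^ 2 ^ n := by
    rw [norm_pow]
    gcongr
  refine (norm_oddKernel_le (norm_pow_lt_one (hz.trans_lt hR) (by positivity))).trans ?_
  have := sub_pos.2 hR
  gcongr
  · exact norm_le.trans (pow_le_pow_of_le_one hR0 hR.le Nat.lt_two_pow_self.le)
  · exact norm_le.trans (pow_le_of_le_one hR0 hR.le (by positivity))

lemma norm_lacunarySeries_term_le (hz : ‖z‖ ≤ R) (hR : R < 1) (n : ℕ) :
    ‖(c n : ℂ) * oddKernel (z ^ 2 ^ n)‖ ≤ R ^ n / (1 - R) := by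
  rw [norm_mul]
  exact (mul_le_of_le_one_left (norm_nonneg _) (norm_signType_coe_le_one _)).trans
    (norm_oddKernel_pow_two_pow_le hz hR n)

lemma summable_lacunarySeries (hz : ‖z‖ < 1) :
    Summable fun n => (c n : ℂ) * oddKernel (z ^ 2 ^ n) :=
  .of_norm_bounded ((summable_geometric_of_lt_one (norm_nonneg z) hz).div_const (1 - ‖z‖))
    (norm_lacunarySeries_term_le le_rfl hz)

lemma differentiableOn_oddKernel_pow_two_pow (n : ℕ) :
    DifferentiableOn ℂ (fun z => oddKernel (z ^ 2 ^ n)) (ball 0 1) :=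
  differentiableOn_oddKernel.comp (by fun_prop) fun _ hz =>
    mem_ball_zero_iff.2 (norm_pow_lt_one (mem_ball_zero_iff.1 hz) (by positivity))

lemma differentiableOn_lacunarySeries (c : ℕ → SignType) :
    DifferentiableOn ℂ (lacunarySeries c) (ball 0 1) := by
  intro z hz
  obtain ⟨R, hzR, hR⟩ := exists_between (mem_ball_zero_iff.1 hz)
  have diff_smaller_ball : DifferentiableOn ℂ (lacunarySeries c) (ball 0 R) :=
    differentiableOn_tsum_of_summable_norm
      ((summable_geometric_of_lt_one ((norm_nonneg z).trans hzR.le) hR).div_const (1 - R))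
      (fun n => ((differentiableOn_oddKernel_pow_two_pow n).mono
        (ball_subset_ball hR.le)).const_mul (c n : ℂ)) isOpen_ball
      fun n w hw => norm_lacunarySeries_term_le (mem_ball_zero_iff.1 hw).le hR n
  exact (diff_smaller_ball.differentiableAt
    (isOpen_ball.mem_nhds (mem_ball_zero_iff.2 hzR))).differentiableWithinAt

lemma continuousOn_lacunarySeries (c : ℕ → SignType) (hr : r ∈ Ioo (0 : ℝ) 1) :
    ContinuousOn (lacunarySeries c) (sphere 0 |r|) :=
  (differentiableOn_lacunarySeries c).continuousOn.mono (sphere_abs_subset_unit_ball hr)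

lemma lacunarySeries_zero (c : ℕ → SignType) : lacunarySeries c 0 = 0 := by
  simp [lacunarySeries, oddKernel]

lemma continuous_lacunarySeries_circle (hr : r ∈ Ioo (0 : ℝ) 1) :
    Continuous fun x : (ℕ → SignType) × ℝ => lacunarySeries x.1 (r * exp (x.2 * I)) := by
  have norm_circle (θ : ℝ) : ‖(r : ℂ) * exp (θ * I)‖ = r := by
    rw [norm_mul, norm_exp_ofReal_mul_I, mul_one, norm_real,
      Real.norm_of_nonneg hr.1.le]
  refine continuous_tsum (fun n => ?_)
    ((summable_geometric_of_lt_one hr.1.le hr.2).div_const (1 - r))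
    fun n x => norm_lacunarySeries_term_le (norm_circle x.2).le hr.2 n
  have cont_coeff : Continuous fun x : (ℕ → SignType) × ℝ => (x.1 n : ℂ) :=
    (continuous_of_discreteTopology (f := fun s : SignType => (s : ℂ))).comp
      ((continuous_apply n).comp continuous_fst)
  refine cont_coeff.mul ((differentiableOn_oddKernel_pow_two_pow n).continuousOn.comp_continuous
    (by fun_prop) fun x => ?_)
  rw [mem_ball_zero_iff, norm_circle]
  exact hr.2

lemma continuous_circMeanR_lacunarySeries {p : ℝ} (hp : 0 ≤ p) {g : ℂ → ℝ} (hg : Continuous g)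
    (hr : r ∈ Ioo (0 : ℝ) 1) :
    Continuous fun c => circMeanR p (fun z => g (lacunarySeries c z)) r :=
  continuous_const.mul (intervalIntegral.continuous_parametric_intervalIntegral_of_continuous'
    ((hg.comp (continuous_lacunarySeries_circle hr)).abs.rpow_const fun _ => Or.inr hp) _ _)

lemma circMeanR_sum_lacunarySeries_re_le {p : ℝ} (hp : p ∈ Ioo (0 : ℝ) 1) (hr : r ∈ Ioo (0 : ℝ) 1)
    (c : ℕ → SignType) (s : Finset ℕ) :
    circMeanR p (fun z => (∑ n ∈ s, (c n : ℂ) * oddKernel (z ^ 2 ^ n)).re) r ≤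
      ∑ n ∈ s, circMeanR p (fun z => (oddKernel (z ^ 2 ^ n)).re) r := by
  have cont_kernel (n : ℕ) : ContinuousOn (fun z : ℂ => oddKernel (z ^ 2 ^ n)) (sphere 0 |r|) :=
    (differentiableOn_oddKernel_pow_two_pow n).continuousOn.mono (sphere_abs_subset_unit_ball hr)
  have cont_term (n : ℕ) :
      ContinuousOn (fun z : ℂ => ((c n : ℂ) * oddKernel (z ^ 2 ^ n)).re) (sphere 0 |r|) :=
    continuous_re.comp_continuousOn ((cont_kernel n).const_mul (c n : ℂ))
  simp only [re_sum]
  refine (circMeanR_finset_sum_le hp.1 hp.2.le s fun n _ => cont_term n).trans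
    (Finset.sum_le_sum fun n _ => circMeanR_mono hp.1.le (cont_term n)
      (continuous_re.comp_continuousOn (cont_kernel n)) fun z _ => ?_)
  cases c n <;> simp

lemma lacunarySeries_piecewise_zero (c : ℕ → SignType) (s : Finset ℕ) (z : ℂ) :
    lacunarySeries (s.piecewise c 0) z = ∑ n ∈ s, (c n : ℂ) * oddKernel (z ^ 2 ^ n) := by
  rw [lacunarySeries, tsum_eq_sum (s := s) fun n hn => by simp [hn]]
  exact Finset.sum_congr rfl fun n hn => by simp [hn]

lemma tendsto_piecewise_range {X : Type*} [TopologicalSpace X] (c d : ℕ → X) :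
    Tendsto (fun N => (Finset.range N).piecewise c d) atTop (𝓝 c) := by
  refine tendsto_pi_nhds.2 fun n => tendsto_const_nhds.congr' ?_
  filter_upwards [eventually_gt_atTop n] with N hN
  rw [Finset.piecewise_eq_of_mem _ _ _ (Finset.mem_range.2 hN)]

lemma hasBoundedMeans_lacunarySeries_re (c : ℕ → SignType) {p : ℝ} (hp : p ∈ Ioo (0 : ℝ) 1) :
    HasBoundedMeans p fun z => (lacunarySeries c z).re := by
  obtain ⟨C, hC⟩ := exists_sum_circMeanR_oddKernel_re_le hp
  refine ⟨C, fun r hr => ?_⟩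
  have truncations_tendsto :=
    ((continuous_circMeanR_lacunarySeries hp.1.le continuous_re hr).tendsto c).comp
      (tendsto_piecewise_range c 0)
  refine le_of_tendsto' truncations_tendsto fun N => ?_
  simp only [Function.comp_apply, lacunarySeries_piecewise_zero]
  exact (circMeanR_sum_lacunarySeries_re_le hp hr c _).trans (hC r hr N)

/-- The lacunary series with coefficients `c` as an element of `⋂_{p<1} h^p`. -/
def lacunaryHarmV (c : ℕ → SignType) : HarmV :=
  ⟨lacunarySeries c, differentiableOn_lacunarySeries c, by rw [lacunarySeries_zero, zero_im],
    fun _ hp => hasBoundedMeans_lacunarySeries_re c hp⟩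

end LacunarySeries

section SignedSum

variable {ι E : Type*} [DecidableEq ι] [AddCommGroup E]

/-- The sum of the vectors `x i`, `i ∈ J`, with sign `+` on `A` and `-` off `A`. As `A` runs over
the subsets of `J`, this realises a Rademacher sum. -/
def signedSum (x : ι → E) (J A : Finset ι) : E := ∑ i ∈ J, if i ∈ A then x i else -x i

lemma signedSum_insert_of_subset (x : ι → E) {J A : Finset ι} {i : ι} (hi : i ∉ J) (hA : A ⊆ J) :
    signedSum x (insert i J) A = signedSum x J A - x i := by
  rw [signedSum, Finset.sum_insert hi, if_neg fun h => hi (hA h), neg_add_eq_sub, signedSum]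

lemma signedSum_insert_insert (x : ι → E) {J : Finset ι} (A : Finset ι) {i : ι} (hi : i ∉ J) :
    signedSum x (insert i J) (insert i A) = signedSum x J A + x i := by
  rw [signedSum, Finset.sum_insert hi, if_pos (Finset.mem_insert_self i A), add_comm, signedSum]
  congr 1
  refine Finset.sum_congr rfl fun j hj => ?_
  simp only [Finset.mem_insert, ne_of_mem_of_not_mem hj hi, false_or]

lemma sum_powerset_insert_signedSum (g : E → ℝ) (x : ι → E) {J : Finset ι} {i : ι} (hi : i ∉ J) :
    ∑ A ∈ (insert i J).powerset, g (signedSum x (insert i J) A) =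
      ∑ A ∈ J.powerset, (g (signedSum x J A + x i) + g (signedSum x J A - x i)) := by
  rw [Finset.sum_powerset_insert hi, add_comm, ← Finset.sum_add_distrib]
  refine Finset.sum_congr rfl fun A hA => ?_
  rw [signedSum_insert_insert x A hi, signedSum_insert_of_subset x hi (Finset.mem_powerset.1 hA)]

end SignedSum

section Khinchin

variable {ι E : Type*} [DecidableEq ι] [NormedAddCommGroup E] [InnerProductSpace ℝ E]

lemma norm_add_sq_add_norm_sub_sq (a b : E) :
    ‖a + b‖ ^ 2 + ‖a - b‖ ^ 2 = 2 * ‖a‖ ^ 2 + 2 * ‖b‖ ^ 2 := by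
  have := parallelogram_law_with_norm ℝ a b
  linarith

lemma norm_add_pow_four_add_norm_sub_pow_four_le (a b : E) :
    ‖a + b‖ ^ 4 + ‖a - b‖ ^ 4 ≤ 2 * ‖a‖ ^ 4 + 12 * ‖a‖ ^ 2 * ‖b‖ ^ 2 + 2 * ‖b‖ ^ 4 := by
  have inner_sq_le : inner ℝ a b ^ 2 ≤ ‖a‖ ^ 2 * ‖b‖ ^ 2 := by
    rw [← mul_pow, sq_le_sq, abs_of_nonneg (by positivity : 0 ≤ ‖a‖ * ‖b‖)]
    exact abs_real_inner_le_norm a b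
  calc ‖a + b‖ ^ 4 + ‖a - b‖ ^ 4 = (‖a + b‖ ^ 2) ^ 2 + (‖a - b‖ ^ 2) ^ 2 := by ring
    _ = 2 * (‖a‖ ^ 2 + ‖b‖ ^ 2) ^ 2 + 8 * inner ℝ a b ^ 2 := by
        rw [norm_add_sq_real, norm_sub_sq_real]
        ring
    _ ≤ 2 * (‖a‖ ^ 2 + ‖b‖ ^ 2) ^ 2 + 8 * (‖a‖ ^ 2 * ‖b‖ ^ 2) := by gcongr
    _ = 2 * ‖a‖ ^ 4 + 12 * ‖a‖ ^ 2 * ‖b‖ ^ 2 + 2 * ‖b‖ ^ 4 := by ring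

lemma sum_norm_signedSum_sq (x : ι → E) (J : Finset ι) :
    ∑ A ∈ J.powerset, ‖signedSum x J A‖ ^ 2 = 2 ^ J.card * ∑ i ∈ J, ‖x i‖ ^ 2 := by
  induction J using Finset.induction_on with
  | empty => simp [signedSum]
  | insert i J hi ih =>
    rw [sum_powerset_insert_signedSum (fun v => ‖v‖ ^ 2) x hi, Finset.sum_insert hi,
      Finset.card_insert_of_notMem hi]
    simp only [norm_add_sq_add_norm_sub_sq, Finset.sum_add_distrib, ← Finset.mul_sum, ih,
      Finset.sum_const, Finset.card_powerset, nsmul_eq_mul]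
    push_cast
    ring

lemma sum_norm_signedSum_pow_four_le (x : ι → E) (J : Finset ι) :
    ∑ A ∈ J.powerset, ‖signedSum x J A‖ ^ 4 ≤ 3 * 2 ^ J.card * (∑ i ∈ J, ‖x i‖ ^ 2) ^ 2 := by
  induction J using Finset.induction_on with
  | empty => simp [signedSum]
  | insert i J hi ih =>
    rw [sum_powerset_insert_signedSum (fun v => ‖v‖ ^ 4) x hi, Finset.sum_insert hi,
      Finset.card_insert_of_notMem hi]
    calc ∑ A ∈ J.powerset, (‖signedSum x J A + x i‖ ^ 4 + ‖signedSum x J A - x i‖ ^ 4)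
        ≤ ∑ A ∈ J.powerset, (2 * ‖signedSum x J A‖ ^ 4 +
            12 * ‖signedSum x J A‖ ^ 2 * ‖x i‖ ^ 2 + 2 * ‖x i‖ ^ 4) :=
          Finset.sum_le_sum fun A _ => norm_add_pow_four_add_norm_sub_pow_four_le _ _
      _ = 2 * ∑ A ∈ J.powerset, ‖signedSum x J A‖ ^ 4 +
            12 * (2 ^ J.card * ∑ i ∈ J, ‖x i‖ ^ 2) * ‖x i‖ ^ 2 + 2 ^ J.card * (2 * ‖x i‖ ^ 4) := by
          rw [← sum_norm_signedSum_sq]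
          simp only [Finset.sum_add_distrib, ← Finset.mul_sum, ← Finset.sum_mul, Finset.sum_const,
            Finset.card_powerset, nsmul_eq_mul]
          push_cast
          ring
      _ ≤ 3 * 2 ^ (J.card + 1) * (‖x i‖ ^ 2 + ∑ i ∈ J, ‖x i‖ ^ 2) ^ 2 := by
          have : 0 ≤ (2 : ℝ) ^ J.card * ‖x i‖ ^ 4 := by positivity
          rw [pow_succ 2 J.card]
          linarith

lemma quarter_mul_sq_sub_pow_four_le_rpow {q s : ℝ} (hq0 : 0 ≤ q) (hq2 : q ≤ 2) (hs : 0 ≤ s) :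
    1 / 4 * (s ^ 2 - s ^ 4 / 4) ≤ s ^ q := by
  rcases le_total s 1 with hs1 | hs1
  · have : s ^ (2 : ℝ) ≤ s ^ q := Real.rpow_le_rpow_of_exponent_ge_of_imp hs hs1 hq2 (by simp)
    rw [Real.rpow_two] at this
    nlinarith [pow_nonneg hs 4, sq_nonneg s]
  · nlinarith [Real.one_le_rpow hs1 hq0, sq_nonneg (s ^ 2 - 2)]

/- For `∑ ‖x i‖ ^ 2 = 1` the pointwise bound `(s² - s⁴ / 4) / 4 ≤ s ^ q` reduces the inequality to
the second and fourth moments, since `(1 - 3 / 4) / 4 = 1 / 16`. -/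
lemma two_pow_mul_sqrt_rpow_le_sum_norm_signedSum_rpow {q : ℝ} (hq0 : 0 ≤ q) (hq2 : q ≤ 2)
    (x : ι → E) (J : Finset ι) (hx : 0 < ∑ i ∈ J, ‖x i‖ ^ 2) :
    2 ^ J.card * (1 / 16 * √(∑ i ∈ J, ‖x i‖ ^ 2) ^ q) ≤
      ∑ A ∈ J.powerset, ‖signedSum x J A‖ ^ q := by
  set Q := ∑ i ∈ J, ‖x i‖ ^ 2 with hQ
  have sqrt_pos : 0 < √Q := Real.sqrt_pos.2 hx
  have sqrt_sq : √Q ^ 2 = Q := Real.sq_sqrt hx.le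
  have sqrt_pow_four : √Q ^ 4 = Q ^ 2 := by rw [pow_mul _ 2 2, sqrt_sq]
  have pointwise (A : Finset ι) :
      √Q ^ q * (1 / 4 * (‖signedSum x J A‖ ^ 2 / Q - ‖signedSum x J A‖ ^ 4 / Q ^ 2 / 4)) ≤
        ‖signedSum x J A‖ ^ q := by
    have := quarter_mul_sq_sub_pow_four_le_rpow hq0 hq2
      (div_nonneg (norm_nonneg (signedSum x J A)) sqrt_pos.le)
    rw [div_pow, div_pow, sqrt_sq, sqrt_pow_four,
      Real.div_rpow (norm_nonneg _) sqrt_pos.le] at this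
    rwa [← le_div_iff₀' (Real.rpow_pos_of_pos sqrt_pos q)]
  refine (Finset.sum_le_sum fun A _ => pointwise A).trans' ?_
  rw [← Finset.mul_sum, ← Finset.mul_sum, Finset.sum_sub_distrib, ← Finset.sum_div,
    ← Finset.sum_div, ← Finset.sum_div, sum_norm_signedSum_sq, ← hQ, mul_div_cancel_right₀ _ hx.ne']
  have fourth_moment : (∑ A ∈ J.powerset, ‖signedSum x J A‖ ^ 4) / Q ^ 2 ≤ 3 * 2 ^ J.card :=
    (div_le_iff₀ (by positivity)).2 (sum_norm_signedSum_pow_four_le x J)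
  have := Real.rpow_pos_of_pos sqrt_pos q
  nlinarith

lemma two_pow_mul_rpow_le_sum_norm_signedSum_rpow {q δ : ℝ} (hq0 : 0 ≤ q) (hq2 : q ≤ 2)
    (hδ : 0 < δ) {x : ι → E} {J : Finset ι} (hJ : J.Nonempty) (hx : ∀ i ∈ J, δ ≤ ‖x i‖) :
    2 ^ J.card * (1 / 16 * (√J.card * δ) ^ q) ≤ ∑ A ∈ J.powerset, ‖signedSum x J A‖ ^ q := by
  have card_mul_sq_le : J.card * δ ^ 2 ≤ ∑ i ∈ J, ‖x i‖ ^ 2 := by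
    rw [← nsmul_eq_mul]
    exact Finset.card_nsmul_le_sum J _ _ fun i hi => by gcongr; exact hx i hi
  have card_pos : 0 < (J.card : ℝ) := Nat.cast_pos.2 hJ.card_pos
  refine (two_pow_mul_sqrt_rpow_le_sum_norm_signedSum_rpow hq0 hq2 x J
    (card_mul_sq_le.trans_lt' (by positivity))).trans' ?_
  gcongr
  exact Real.le_sqrt_of_sq_le (by rwa [mul_pow, Real.sq_sqrt card_pos.le])

end Khinchin

section UniformBoundedness

lemma exists_uniform_bound_on_cylinder {ι κ : Type*} {X : ι → Type*}
    [∀ i, TopologicalSpace (X i)] [BaireSpace (∀ i, X i)] [Nonempty (∀ i, X i)]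
    {F : κ → (∀ i, X i) → ℝ} (hF : ∀ k, Continuous (F k)) (bdd : ∀ c, ∃ M, ∀ k, F k c ≤ M) :
    ∃ (c₀ : ∀ i, X i) (s : Finset ι) (M : ℝ), ∀ c, (∀ i ∈ s, c i = c₀ i) → ∀ k, F k c ≤ M := by
  have closed (M : ℕ) : IsClosed {c | ∀ k, F k c ≤ M} := by
    rw [ofPred_forall]
    exact isClosed_iInter fun k => isClosed_le (hF k) continuous_const
  have covers : ⋃ M : ℕ, {c | ∀ k, F k c ≤ M} = univ := by
    refine eq_univ_of_forall fun c => mem_iUnion.2 ?_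
    obtain ⟨M, hM⟩ := bdd c
    obtain ⟨n, hn⟩ := exists_nat_ge M
    exact ⟨n, fun k => (hM k).trans hn⟩
  obtain ⟨M, c₀, hc₀⟩ := nonempty_interior_of_iUnion_of_closed closed covers
  obtain ⟨s, u, hu, hsub⟩ := isOpen_pi_iff.1 isOpen_interior c₀ hc₀
  refine ⟨c₀, s, M, fun c hc => interior_subset (hsub fun i hi => ?_)⟩
  rw [hc i hi]
  exact (hu i hi).2

end UniformBoundedness

section UnboundedConjugate

variable {q r : ℝ}

/-- The coefficient sequence with value `1` on `A` and `-1` off `A`. -/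
def signPattern (A : Finset ℕ) (i : ℕ) : SignType := if i ∈ A then 1 else -1

lemma lacunarySeries_signPattern_sub (c : ℕ → SignType) (J A : Finset ℕ) {z : ℂ} (hz : ‖z‖ < 1) :
    lacunarySeries (J.piecewise (signPattern A) c) z -
        lacunarySeries (J.piecewise (-signPattern A) c) z =
      2 * signedSum (fun i => oddKernel (z ^ 2 ^ i)) J A := by
  rw [lacunarySeries, lacunarySeries, ← (summable_lacunarySeries hz).tsum_sub
    (summable_lacunarySeries hz), tsum_eq_sum (s := J) fun i hi => by simp [hi], signedSum,
    Finset.mul_sum]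
  refine Finset.sum_congr rfl fun i hi => ?_
  by_cases hA : i ∈ A <;> simp [signPattern, hi, hA] <;> ring

lemma continuousOn_signedSum_oddKernel (hr : r ∈ Ioo (0 : ℝ) 1) (J A : Finset ℕ) :
    ContinuousOn (fun z => signedSum (fun i => oddKernel (z ^ 2 ^ i)) J A) (sphere 0 |r|) := by
  refine continuousOn_finsetSum J fun i _ => ?_
  have cont_kernel := (differentiableOn_oddKernel_pow_two_pow i).continuousOn.mono
    (sphere_abs_subset_unit_ball hr)
  split_ifs
  exacts [cont_kernel, cont_kernel.neg]

lemma circMeanR_norm_signedSum_le (hq : q ∈ Ioo (0 : ℝ) 1) (hr : r ∈ Ioo (0 : ℝ) 1)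
    (c : ℕ → SignType) (J A : Finset ℕ) :
    circMeanR q (fun z => ‖signedSum (fun i => oddKernel (z ^ 2 ^ i)) J A‖) r ≤
      circMeanR q (fun z => ‖lacunarySeries (J.piecewise (signPattern A) c) z‖) r +
        circMeanR q (fun z => ‖lacunarySeries (J.piecewise (-signPattern A) c) z‖) r := by
  refine circMeanR_le_add_of_abs_le_add hq.1 hq.2.le (continuousOn_signedSum_oddKernel hr J A).norm
    (continuousOn_lacunarySeries _ hr).norm (continuousOn_lacunarySeries _ hr).norm fun z hz => ?_
  have hz1 : ‖z‖ < 1 := mem_ball_zero_iff.1 (sphere_abs_subset_unit_ball hr hz)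
  simp only [abs_norm]
  calc ‖signedSum (fun i => oddKernel (z ^ 2 ^ i)) J A‖
      ≤ ‖2 * signedSum (fun i => oddKernel (z ^ 2 ^ i)) J A‖ := by
        rw [norm_mul, norm_ofNat]
        linarith [norm_nonneg (signedSum (fun i => oddKernel (z ^ 2 ^ i)) J A)]
    _ ≤ ‖lacunarySeries (J.piecewise (signPattern A) c) z‖ +
          ‖lacunarySeries (J.piecewise (-signPattern A) c) z‖ := by
        rw [← lacunarySeries_signPattern_sub c J A hz1]
        exact norm_sub_le _ _

lemma two_pow_mul_rpow_le_sum_circMeanR_signedSum (hq : q ∈ Ioo (0 : ℝ) 1)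
    (hr : r ∈ Ioo (0 : ℝ) 1) {J : Finset ℕ} (hJ : J.Nonempty) (hrJ : ∀ i ∈ J, 1 / 2 ≤ r ^ 2 ^ i) :
    2 ^ J.card * (1 / 16 * (√J.card * (1 / 4)) ^ q) ≤ ∑ A ∈ J.powerset,
      circMeanR q (fun z => ‖signedSum (fun i => oddKernel (z ^ 2 ^ i)) J A‖) r := by
  have integrable (A : Finset ℕ) :=
    circleIntegrable_abs_rpow hq.1.le (continuousOn_signedSum_oddKernel hr J A).norm
  simp only [circMeanR_eq_circleAverage]
  rw [← Real.circleAverage_fun_sum fun A _ => integrable A,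
    ← Real.circleAverage_const (2 ^ J.card * (1 / 16 * (√J.card * (1 / 4)) ^ q)) 0 r]
  refine Real.circleAverage_mono (circleIntegrable_const _ _ _)
    (CircleIntegrable.fun_sum _ fun A _ => integrable A) fun z hz => ?_
  have norm_pow_eq (i : ℕ) : ‖z ^ 2 ^ i‖ = r ^ 2 ^ i := by
    rw [norm_pow, mem_sphere_zero_iff_norm.1 hz, abs_of_pos hr.1]
  simp only [abs_norm]
  refine two_pow_mul_rpow_le_sum_norm_signedSum_rpow hq.1.le (by linarith [hq.2]) (by norm_num) hJ
    fun i hi => one_quarter_le_norm_oddKernel ((norm_pow_eq i).symm ▸ hrJ i hi) ?_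
  rw [norm_pow_eq]
  exact pow_lt_one₀ hr.1.le hr.2 (by positivity)

lemma exists_half_le_pow_two_pow (J : Finset ℕ) :
    ∃ r ∈ Ioo (0 : ℝ) 1, ∀ i ∈ J, 1 / 2 ≤ r ^ 2 ^ i := by
  have eventually_le : ∀ᶠ r : ℝ in 𝓝[<] 1, ∀ i ∈ J, 1 / 2 ≤ r ^ 2 ^ i := by
    refine (eventually_all_finset J).2 fun i _ => nhdsWithin_le_nhds ?_
    have : Tendsto (fun r : ℝ => r ^ 2 ^ i) (𝓝 1) (𝓝 (1 ^ 2 ^ i)) := (continuous_pow _).tendsto 1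
    rw [one_pow] at this
    exact this.eventually_const_le (by norm_num)
  have eventually_mem : ∀ᶠ r : ℝ in 𝓝[<] 1, r ∈ Ioo (0 : ℝ) 1 := Ioo_mem_nhdsLT zero_lt_one
  exact (eventually_mem.and eventually_le).exists

lemma card_rpow_le_of_bounded_on_cylinder (hq : q ∈ Ioo (0 : ℝ) 1) {c₀ : ℕ → SignType}
    {s : Finset ℕ} {M : ℝ} (hM : ∀ c : ℕ → SignType, (∀ i ∈ s, c i = c₀ i) →
      ∀ r : Ioo (0 : ℝ) 1, circMeanR q (fun z => ‖lacunarySeries c z‖) r ≤ M)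
    {J : Finset ℕ} (hJ : J.Nonempty) (hsJ : Disjoint s J) :
    1 / 16 * (√J.card * (1 / 4)) ^ q ≤ M + M := by
  obtain ⟨r, hr, hrJ⟩ := exists_half_le_pow_two_pow J
  have piecewise_le (c : ℕ → SignType) :
      circMeanR q (fun z => ‖lacunarySeries (J.piecewise c c₀) z‖) r ≤ M :=
    hM _ (fun i hi => J.piecewise_eq_of_notMem _ _ (Finset.disjoint_left.1 hsJ hi)) ⟨r, hr⟩
  refine le_of_mul_le_mul_left ?_ (pow_pos two_pos J.card : (0 : ℝ) < 2 ^ J.card)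
  calc 2 ^ J.card * (1 / 16 * (√J.card * (1 / 4)) ^ q)
      ≤ ∑ A ∈ J.powerset,
          circMeanR q (fun z => ‖signedSum (fun i => oddKernel (z ^ 2 ^ i)) J A‖) r :=
        two_pow_mul_rpow_le_sum_circMeanR_signedSum hq hr hJ hrJ
    _ ≤ ∑ _A ∈ J.powerset, (M + M) := Finset.sum_le_sum fun A _ =>
        (circMeanR_norm_signedSum_le hq hr c₀ J A).trans
          (add_le_add (piecewise_le _) (piecewise_le _))
    _ = 2 ^ J.card * (M + M) := by
        rw [Finset.sum_const, Finset.card_powerset, nsmul_eq_mul, Nat.cast_pow, Nat.cast_ofNat]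

lemma hasBoundedMeans_norm_lacunarySeries (hq : q ∈ Ioo (0 : ℝ) 1) {c : ℕ → SignType}
    (him : HasBoundedMeans q fun z => (lacunarySeries c z).im) :
    HasBoundedMeans q fun z => ‖lacunarySeries c z‖ := by
  obtain ⟨C, hC⟩ := him
  obtain ⟨D, hD⟩ := hasBoundedMeans_lacunarySeries_re c hq
  refine ⟨D + C, fun r hr => ?_⟩
  have cont := continuousOn_lacunarySeries c hr
  refine (circMeanR_le_add_of_abs_le_add hq.1 hq.2.le cont.norm
    (continuous_re.comp_continuousOn cont) (continuous_im.comp_continuousOn cont)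
    fun z _ => ?_).trans (add_le_add (hD r hr) (hC r hr))
  rw [abs_norm]
  exact norm_le_abs_re_add_abs_im _

lemma exists_not_hasBoundedMeans_lacunarySeries_im (hq : q ∈ Ioo (0 : ℝ) 1) :
    ∃ c, ¬ HasBoundedMeans q fun z => (lacunarySeries c z).im := by
  by_contra! him
  obtain ⟨c₀, s, M, hM⟩ := exists_uniform_bound_on_cylinder
    (F := fun (r : Ioo (0 : ℝ) 1) c => circMeanR q (fun z => ‖lacunarySeries c z‖) r)
    (fun r => continuous_circMeanR_lacunarySeries hq.1.le continuous_norm r.2) fun c => by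
      obtain ⟨M, hM⟩ := hasBoundedMeans_norm_lacunarySeries hq (him c)
      exact ⟨M, fun r => hM r r.2⟩
  have lower_bound_tendsto :
      Tendsto (fun N : ℕ => 1 / 16 * (√(N : ℝ) * (1 / 4)) ^ q) atTop atTop :=
    ((tendsto_rpow_atTop hq.1).comp ((Real.tendsto_sqrt_atTop.comp
      tendsto_natCast_atTop_atTop).atTop_mul_const (by norm_num))).const_mul_atTop (by norm_num)
  obtain ⟨N, hN, hN0⟩ :=
    ((lower_bound_tendsto.eventually_gt_atTop (M + M)).and (eventually_gt_atTop 0)).exists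
  obtain ⟨J, hJs, rfl⟩ := s.finite_toSet.infinite_compl.exists_subset_card_eq N
  refine hN.not_ge (card_rpow_le_of_bounded_on_cylinder hq hM (Finset.card_pos.1 hN0) ?_)
  exact Finset.disjoint_right.2 fun i hi => hJs hi

end UnboundedConjugate

/-- Proposition 3.1: for `0 < q < 1`, the set `Λ_q` of `u ∈ ⋂_{p<1} h^p` whose normalized
harmonic conjugate `ũ = Im f` is not in `h^q` is a `G_δ` dense subset of `⋂_{p<1} h^p`. -/
theorem conjugate_not_hq_generic (q : ℝ) (hq0 : 0 < q) (hq1 : q < 1) :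
    @IsGδ HarmV (ballTopology harmDist)
      {f : HarmV | ∀ C : ℝ, ∃ r ∈ Set.Ioo (0 : ℝ) 1,
        C < circMeanR q (fun z => (f.1 z).im) r} ∧
    @Dense HarmV (ballTopology harmDist)
      {f : HarmV | ∀ C : ℝ, ∃ r ∈ Set.Ioo (0 : ℝ) 1,
        C < circMeanR q (fun z => (f.1 z).im) r} := by
  have hq : q ∈ Ioo (0 : ℝ) 1 := ⟨hq0, hq1⟩
  have set_eq : {f : HarmV | ∀ C : ℝ, ∃ r ∈ Set.Ioo (0 : ℝ) 1,
      C < circMeanR q (fun z => (f.1 z).im) r} =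
      {f : HarmV | ¬ HasBoundedMeans q fun z => (f.1 z).im} := by
    simp only [HasBoundedMeans, not_exists, not_forall, not_le, exists_prop]
  have topology_eq : ballTopology harmDist = UniformSpace.toTopologicalSpace :=
    ballTopology_dist HarmV
  obtain ⟨c, hc⟩ := exists_not_hasBoundedMeans_lacunarySeries_im hq
  rw [set_eq, topology_eq]
  exact ⟨HarmV.isGδ_not_hasBoundedMeans_im hq,
    HarmV.dense_not_hasBoundedMeans_im hq (h := lacunaryHarmV c) hc⟩

end
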